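/- arXiv:math/0406339 — 5 statements merged into one kernel-verified Lean document; each statement's English description precedes it below -/
import Mathlib

section
/- Let M be a regular matroid on a finite ground set E, represented as the column matroid of a real r×E matrix A of full row rank r all of whose square submatrices have determinant in {0, 1, −1} (the bases of M are the r-element subsets S ⊆ E with det A[S] ≠ 0, where A[S] is the submatrix on the columns S). Let π = (S, T, C_1, …, C_k) be a partition of E into pairwise disjoint nonempty subsets and let c_1, …, c_k be nonnegative integers. For 0 ≤ j ≤ |S| let M_j(π) be the number of bases B of M with |B ∩ S| = j and |B ∩ C_i| = c_i for all 1 ≤ i ≤ k. Then for every 1 ≤ j ≤ |S| − 1: M_j(π)² / C(|S|,j)² ≥ (M_{j−1}(π) / C(|S|,j−1)) · (M_{j+1}(π) / C(|S|,j+1)), where C(n,j) denotes the binomial coefficient. -/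
open scoped BigOperators
open Classical

noncomputable section

/-- `B` is a basis of the column matroid of the `r × E` matrix `A`: the square submatrix of
`A` on the columns `B` (for some, equivalently any, indexing of `B` by `Fin r`) has nonzero
determinant. -/
def IsColBasis {r : ℕ} {E : Type*} {F : Type*} [Field F]
    (A : Matrix (Fin r) E F) (B : Finset E) : Prop :=
  ∃ g : Fin r ≃ ↥B, (A.submatrix id (fun i : Fin r => ((g i : ↥B) : E))).det ≠ 0

/-- The number `M_j(π)` of bases `B` of the column matroid of `A` with `|B ∩ S| = j` and
`|B ∩ C i| = c i` for all `i`. -/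
noncomputable def basisCount {r : ℕ} {E : Type*} [Fintype E] {F : Type*} [Field F]
    (A : Matrix (Fin r) E F) {k : ℕ} (S : Finset E) (C : Fin k → Finset E) (c : Fin k → ℕ)
    (j : ℕ) : ℕ :=
  Nat.card {B : Finset E // IsColBasis A B ∧ (B ∩ S).card = j ∧ ∀ i, (B ∩ C i).card = c i}

/-!
Let `A` represent the matroid. By the Cauchy–Binet formula and unimodularity,
`det (A * diagonal z * Aᴴ)` is the generating polynomial `∑ ∏ e ∈ B, z e` over the bases `B`, and
the determinant does not vanish when every `z e` lies in the open upper half-plane: for `u` in the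
row space of `A`, the imaginary part of `∑ z e * |u e| ^ 2` is positive unless `u = 0`.

Give all elements of a block the same variable. Stability survives setting the variable of `T` to
`1` and extracting the coefficient of degree `c i` in the variable of `C i`: both operations are
limits of functionals that vanish on no stable polynomial. For the coefficient functional, these
are `p ↦ ((D - a) ^ n p)(a) / n!` as `a → 0` in the upper half-plane; each factor `D - a` preserves
stability because `p' / p` has nonpositive imaginary part there. What remains is a real polynomial
in the variable of `S` whose coefficients are the numbers `M_j(π)`. If nonzero, it is stable, hence
real-rooted, and Newton's inequalities conclude.
-/

/-! ### Newton's inequalities -/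

section Newton

open Polynomial

theorem splits_derivative {p : ℝ[X]} (hp : p.Splits) : (derivative p).Splits := by
  rcases eq_or_ne p.natDegree 0 with h0 | h0
  · rw [eq_C_of_natDegree_eq_zero h0, derivative_C]
    exact .zero
  · rw [splits_iff_card_roots] at hp ⊢
    have hrolle := p.card_roots_le_derivative
    have hle := (derivative p).card_roots'
    have hlt := natDegree_derivative_lt h0
    lia

theorem splits_reverse {F : Type*} [Field F] {p : F[X]} (hp : p.Splits) : p.reverse.Splits := by
  induction hp using Submonoid.closure_induction with
  | mem p hp =>
    rcases hp with ⟨a, rfl⟩ | ⟨a, rfl⟩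
    · simp
    · exact .of_natDegree_le_one ((reverse_natDegree_le _).trans (by simp))
  | one => rw [← C_1, reverse_C]; exact .C _
  | mul p q _ _ hp hq => simpa only [reverse_mul_of_domain] using hp.mul hq

theorem splits_reflect {F : Type*} [Field F] {p : F[X]} (hp : p.Splits) {n : ℕ}
    (hn : p.natDegree ≤ n) : (p.reflect n).Splits := by
  obtain ⟨k, rfl⟩ := Nat.exists_eq_add_of_le hn
  have h := reflect_mul p 1 le_rfl (G := k) (by simp)
  rw [mul_one, ← C_1, reflect_C] at h
  rw [h]
  exact (splits_reverse hp).mul ((Splits.C _).mul (Splits.X.pow _))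

theorem four_mul_coeff_mul_coeff_le_sq_of_splits {p : ℝ[X]} (hp : p.Splits)
    (hdeg : p.natDegree ≤ 2) : 4 * p.coeff 0 * p.coeff 2 ≤ p.coeff 1 ^ 2 := by
  rcases eq_or_ne (p.coeff 2) 0 with h2 | h2
  · simpa [h2] using sq_nonneg (p.coeff 1)
  · have hdeg2 : p.natDegree = 2 := hdeg.antisymm (le_natDegree_of_ne_zero h2)
    obtain ⟨x, hx⟩ := hp.exists_eval_eq_zero (degree_ne_of_natDegree_ne (n := 0) (by lia))
    rw [eval_eq_sum_range, hdeg2] at hx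
    simp only [Finset.sum_range_succ, Finset.sum_range_zero] at hx
    have hdisc := discrim_eq_sq_of_quadratic_eq_zero
      (a := p.coeff 2) (b := p.coeff 1) (c := p.coeff 0) (x := x) (by linear_combination hx)
    rw [discrim] at hdisc
    nlinarith [sq_nonneg (2 * p.coeff 2 * x + p.coeff 1)]

/-- The coefficient of `X ^ j` in `p`, divided by that of `(1 + X) ^ n`: the quantity in which
Newton's inequalities for polynomials of degree at most `n` become log-concavity.
It is `0` for `j > n`. -/
def normalizedCoeff (n : ℕ) (p : ℝ[X]) (j : ℕ) : ℝ := p.coeff j / n.choose j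

theorem normalizedCoeff_derivative (n : ℕ) (p : ℝ[X]) (j : ℕ) :
    normalizedCoeff n (derivative p) j = (n + 1) * normalizedCoeff (n + 1) p (j + 1) := by
  simp only [normalizedCoeff, coeff_derivative]
  rcases lt_or_ge n j with hnj | hjn
  · simp [Nat.choose_eq_zero_of_lt hnj, Nat.choose_eq_zero_of_lt (Nat.succ_lt_succ hnj)]
  · have h0 : (n.choose j : ℝ) ≠ 0 := by exact_mod_cast (Nat.choose_pos hjn).ne'
    have h1 : ((n + 1).choose (j + 1) : ℝ) ≠ 0 := by
      exact_mod_cast (Nat.choose_pos (Nat.succ_le_succ hjn)).ne'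
    have hchoose : ((n + 1) * n.choose j : ℝ) = (n + 1).choose (j + 1) * (j + 1) := by
      exact_mod_cast Nat.add_one_mul_choose_eq n j
    field_simp
    linear_combination -p.coeff (j + 1) * hchoose

theorem normalizedCoeff_reflect {n j : ℕ} (p : ℝ[X]) (hj : j ≤ n) :
    normalizedCoeff n (p.reflect n) j = normalizedCoeff n p (n - j) := by
  rw [normalizedCoeff, normalizedCoeff, coeff_reflect, revAt_le hj, Nat.choose_symm hj]

/- Differentiation and reflection both permute the normalized coefficients up to a scalar, so they
reduce every instance of the inequality to the discriminant of a quadratic polynomial. -/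
theorem normalizedCoeff_mul_le_sq_of_splits {n : ℕ} {p : ℝ[X]} (hp : p.Splits)
    (hdeg : p.natDegree ≤ n) {j : ℕ} (hj : j + 2 ≤ n) :
    normalizedCoeff n p j * normalizedCoeff n p (j + 2) ≤ normalizedCoeff n p (j + 1) ^ 2 := by
  induction n generalizing p j with
  | zero => lia
  | succ n ih =>
    have of_derivative {q : ℝ[X]} (hq : q.Splits) (hqdeg : q.natDegree ≤ n + 1) {i : ℕ}
        (hi : i + 2 ≤ n) :
        normalizedCoeff (n + 1) q (i + 1) * normalizedCoeff (n + 1) q (i + 3) ≤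
          normalizedCoeff (n + 1) q (i + 2) ^ 2 := by
      have h := ih (splits_derivative hq)
        ((natDegree_derivative_le q).trans (Nat.sub_le_of_le_add hqdeg)) hi
      simp only [normalizedCoeff_derivative] at h
      have hn : (0 : ℝ) < (n + 1) ^ 2 := by positivity
      exact le_of_mul_le_mul_left (by linear_combination h) hn
    rcases j with _ | i
    · rcases eq_or_ne n 1 with rfl | hn1
      · have h := four_mul_coeff_mul_coeff_le_sq_of_splits hp hdeg
        simp only [normalizedCoeff, zero_add, one_add_one_eq_two, Nat.choose_zero_right,
          Nat.choose_one_right, Nat.choose_self, Nat.cast_one, Nat.cast_ofNat]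
        linarith
      · obtain ⟨m, rfl⟩ : ∃ m, n = m + 2 := Nat.exists_eq_add_of_le' (by lia)
        have h := of_derivative (splits_reflect hp hdeg)
          (natDegree_reflect_le.trans (max_le le_rfl hdeg)) (i := m) le_rfl
        rw [normalizedCoeff_reflect _ (by lia), normalizedCoeff_reflect _ (by lia),
          normalizedCoeff_reflect _ (by lia), mul_comm] at h
        convert h using 3 <;> lia
    · exact of_derivative hp hdeg (by lia)

end Newton

/-! ### Stable polynomials in one variable -/

section Univariate

open Polynomial Filter Topology

/-- A univariate complex polynomial is *stable* if it has no zero in the open upper half-plane. -/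
def IsStable (p : ℂ[X]) : Prop := ∀ z : ℂ, 0 < z.im → p.eval z ≠ 0

theorem IsStable.im_nonpos_of_mem_roots {p : ℂ[X]} (hp : IsStable p) {w : ℂ} (hw : w ∈ p.roots) :
    w.im ≤ 0 :=
  not_lt.1 fun him => hp w him (isRoot_of_mem_roots hw)

theorem IsStable.derivative_sub_smul {p : ℂ[X]} (hp : IsStable p) {a : ℂ} (ha : 0 < a.im) :
    IsStable (derivative p - a • p) := by
  intro z hz h0
  have hlog := (IsAlgClosed.splits p).eval_derivative_div_eval_of_ne_zero (hp z hz)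
  rw [eval_sub, eval_smul, smul_eq_mul, sub_eq_zero] at h0
  rw [h0, mul_div_cancel_right₀ _ (hp z hz)] at hlog
  have him : (p.roots.map fun w => 1 / (z - w)).sum.im ≤ 0 := by
    refine Multiset.sum_induction (fun u : ℂ => u.im ≤ 0) _
      (fun u v hu hv => add_nonpos hu hv) le_rfl fun u hu => ?_
    obtain ⟨w, hw, rfl⟩ := Multiset.mem_map.1 hu
    rw [one_div, Complex.inv_im, Complex.sub_im]
    exact div_nonpos_of_nonpos_of_nonneg (by linarith [hp.im_nonpos_of_mem_roots hw])
      (Complex.normSq_nonneg _)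
  exact ha.not_ge (hlog ▸ him)

/- A root `w` outside the half-plane satisfies `|z₀ - w| ≥ im z₀`, which bounds the growth of each
linear factor of `p`. -/
theorem IsStable.norm_eval_le {p : ℂ[X]} (hp : IsStable p) {z₀ : ℂ} (hz₀ : 0 < z₀.im) (z : ℂ) :
    ‖p.eval z‖ ≤ ‖p.eval z₀‖ * (1 + ‖z - z₀‖ / z₀.im) ^ p.natDegree := by
  have hs := IsAlgClosed.splits p
  set K := 1 + ‖z - z₀‖ / z₀.im with hK
  have hfactor : ∀ w ∈ p.roots, ‖z - w‖ ≤ ‖z₀ - w‖ * K := by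
    intro w hw
    have hdist : z₀.im ≤ ‖z₀ - w‖ := by
      have := (le_abs_self _).trans (Complex.abs_im_le_norm (z₀ - w))
      rw [Complex.sub_im] at this
      linarith [hp.im_nonpos_of_mem_roots hw]
    calc ‖z - w‖ ≤ ‖z - z₀‖ + ‖z₀ - w‖ := norm_sub_le_norm_sub_add_norm_sub _ _ _
      _ = z₀.im * (‖z - z₀‖ / z₀.im) + ‖z₀ - w‖ := by field_simp
      _ ≤ ‖z₀ - w‖ * (‖z - z₀‖ / z₀.im) + ‖z₀ - w‖ := by gcongr
      _ = ‖z₀ - w‖ * K := by rw [hK]; ring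
  have norm_eval (x : ℂ) :
      ‖p.eval x‖ = ‖p.leadingCoeff‖ * (p.roots.map fun w => ‖x - w‖).prod := by
    rw [hs.eval_eq_prod_roots, norm_mul]
    congr 1
    simpa using map_multiset_prod (normHom (α := ℂ)) (p.roots.map fun w => x - w)
  calc ‖p.eval z‖ = ‖p.leadingCoeff‖ * (p.roots.map fun w => ‖z - w‖).prod := norm_eval z
    _ ≤ ‖p.leadingCoeff‖ * (p.roots.map fun w => ‖z₀ - w‖ * K).prod := by
      gcongr
      exact Multiset.prod_map_le_prod_map₀ _ _ (fun _ _ => norm_nonneg _) hfactor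
    _ = ‖p.eval z₀‖ * K ^ p.natDegree := by
      rw [Multiset.prod_map_mul, Multiset.map_const', Multiset.prod_replicate, norm_eval z₀,
        hs.natDegree_eq_card_roots, mul_assoc]

theorem eq_zero_or_isStable_of_tendsto {α : Type*} {l : Filter α} [l.NeBot] {Q : α → ℂ[X]}
    {q : ℂ[X]} {d : ℕ} (hQ : ∀ᶠ a in l, IsStable (Q a)) (hd : ∀ᶠ a in l, (Q a).natDegree ≤ d)
    (hlim : ∀ z, Tendsto (fun a => (Q a).eval z) l (𝓝 (q.eval z))) : q = 0 ∨ IsStable q := by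
  refine or_iff_not_imp_right.2 fun hq => ?_
  simp only [IsStable, not_forall, not_not] at hq
  obtain ⟨z₀, hz₀, hzero⟩ := hq
  have hbound (z : ℂ) : ‖q.eval z‖ ≤ ‖q.eval z₀‖ * (1 + ‖z - z₀‖ / z₀.im) ^ d := by
    refine le_of_tendsto_of_tendsto (hlim z).norm ((hlim z₀).norm.mul_const _) ?_
    filter_upwards [hQ, hd] with a hstable hdeg
    refine (hstable.norm_eval_le hz₀ z).trans ?_
    gcongr
    exact le_add_of_nonneg_right (by positivity)
  refine Polynomial.funext fun z => ?_
  simpa [hzero] using hbound z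

theorem splits_of_isStable_map {q : ℝ[X]} (hq : IsStable (q.map Complex.ofRealHom)) :
    q.Splits := by
  refine (IsAlgClosed.splits (q.map Complex.ofRealHom)).of_splits_map _ fun w hw => ?_
  have hconj : starRingEnd ℂ w ∈ (q.map Complex.ofRealHom).roots := by
    rw [mem_roots'] at hw ⊢
    refine ⟨hw.1, ?_⟩
    have h := hom_eval₂ q Complex.ofRealHom (starRingEnd ℂ) w
    rw [← eval_map, hw.2.eq_zero, map_zero] at h
    rw [IsRoot, eval_map, h]
    congr 1
    ext x
    simp
  have him : w.im = 0 := (hq.im_nonpos_of_mem_roots hw).antisymm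
    (by simpa using hq.im_nonpos_of_mem_roots hconj)
  exact ⟨w.re, Complex.ext (by simp) (by simp [him])⟩

/-- A linear functional is *nonvanishing on stable polynomials* if it sends no stable polynomial
to zero, as evaluation at a point of the upper half-plane does. -/
def NonvanishingOnStable (L : ℂ[X] →ₗ[ℂ] ℂ) : Prop := ∀ p, IsStable p → L p ≠ 0

/-- A pointwise limit of linear functionals that are nonvanishing on stable polynomials. -/
def IsLimitOfNonvanishing (L : ℂ[X] →ₗ[ℂ] ℂ) : Prop :=
  ∃ M : ℝ → ℂ[X] →ₗ[ℂ] ℂ, (∀ ε > 0, NonvanishingOnStable (M ε)) ∧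
    ∀ p, Tendsto (fun ε => M ε p) (𝓝[>] 0) (𝓝 (L p))

theorem nonvanishingOnStable_leval {z : ℂ} (hz : 0 < z.im) : NonvanishingOnStable (leval z) :=
  fun _ hp => hp z hz

theorem isLimitOfNonvanishing_leval (x : ℝ) : IsLimitOfNonvanishing (leval (x : ℂ)) := by
  refine ⟨fun ε => leval (x + ε * Complex.I),
    fun ε hε => nonvanishingOnStable_leval (by simpa using hε), fun p => ?_⟩
  have hcont : Continuous fun ε : ℝ => p.eval (x + ε * Complex.I) := by fun_prop
  simpa using (hcont.tendsto 0).mono_left nhdsWithin_le_nhds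

/-- The functional `p ↦ ((D - a) ^ n p)(a) / n!`, where `D` is differentiation. It deforms the
coefficient functional of `X ^ n`, its value at `a = 0`. -/
def perturbedCoeff (a : ℂ) (n : ℕ) : ℂ[X] →ₗ[ℂ] ℂ :=
  (n.factorial : ℂ)⁻¹ • leval a ∘ₗ ((derivative - a • 1 : Module.End ℂ ℂ[X]) ^ n)

theorem nonvanishingOnStable_perturbedCoeff {a : ℂ} (ha : 0 < a.im) (n : ℕ) :
    NonvanishingOnStable (perturbedCoeff a n) := by
  intro p hp
  have hstable : IsStable (((derivative - a • 1 : Module.End ℂ ℂ[X]) ^ n) p) := by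
    induction n with
    | zero => exact hp
    | succ n ih =>
      rw [pow_succ', Module.End.mul_apply]
      exact ih.derivative_sub_smul ha
  exact mul_ne_zero (inv_ne_zero (by exact_mod_cast n.factorial_ne_zero)) (hstable a ha)

theorem perturbedCoeff_zero (n : ℕ) : perturbedCoeff 0 n = lcoeff ℂ n := by
  ext p
  have hfact : (n.factorial : ℂ) ≠ 0 := by exact_mod_cast n.factorial_ne_zero
  simp [perturbedCoeff, Module.End.pow_apply, ← coeff_zero_eq_eval_zero, coeff_iterate_derivative,
    Nat.descFactorial_self, hfact]

theorem continuous_perturbedCoeff (n : ℕ) (p : ℂ[X]) :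
    Continuous fun a => perturbedCoeff a n p := by
  refine continuous_const.mul ?_
  induction n generalizing p with
  | zero => exact p.continuous
  | succ n ih =>
    have hsucc (a : ℂ) : ((derivative - a • 1 : Module.End ℂ ℂ[X]) ^ (n + 1)) p =
        ((derivative - a • 1 : Module.End ℂ ℂ[X]) ^ n) (derivative p) -
          a • ((derivative - a • 1 : Module.End ℂ ℂ[X]) ^ n) p := by
      rw [pow_succ, Module.End.mul_apply, ← map_smul, ← map_sub]
      rfl
    simp only [LinearMap.comp_apply, hsucc, map_sub, map_smul]
    exact (ih _).sub (continuous_id.smul (ih p))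

theorem isLimitOfNonvanishing_lcoeff (n : ℕ) : IsLimitOfNonvanishing (lcoeff ℂ n) := by
  refine ⟨fun ε => perturbedCoeff (ε * Complex.I) n,
    fun ε hε => nonvanishingOnStable_perturbedCoeff (by simpa using hε) n, fun p => ?_⟩
  have hcont : Continuous fun ε : ℝ => perturbedCoeff (ε * Complex.I) n p :=
    (continuous_perturbedCoeff n p).comp (by fun_prop)
  simpa [perturbedCoeff_zero] using (hcont.tendsto 0).mono_left nhdsWithin_le_nhds

end Univariate

/-! ### Stable polynomials in several variables -/

section Multivariate

open Filter Topology
open Polynomial (leval lcoeff)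
open scoped Polynomial

variable {σ : Type*}

/-- A multivariate complex polynomial is *stable* if it does not vanish when all variables lie in
the open upper half-plane. -/
def IsMvStable (P : MvPolynomial σ ℂ) : Prop :=
  ∀ z : σ → ℂ, (∀ v, 0 < (z v).im) → MvPolynomial.eval z P ≠ 0

theorem IsMvStable.rename {τ : Type*} {P : MvPolynomial σ ℂ} (hP : IsMvStable P) (f : σ → τ) :
    IsMvStable (MvPolynomial.rename f P) := fun z hz => by
  rw [MvPolynomial.eval_rename]
  exact hP _ fun v => hz (f v)

variable [Fintype σ]

/-- The tensor product of the functionals `L v`, applying each `L v` to the variable `v`. -/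
def contract (L : σ → ℂ[X] →ₗ[ℂ] ℂ) : MvPolynomial σ ℂ →ₗ[ℂ] ℂ :=
  (MvPolynomial.basisMonomials σ ℂ).constr ℂ fun m => ∏ v, L v (Polynomial.X ^ m v)

/-- Apply `L v` to each variable `v ≠ s`, leaving a univariate polynomial in the variable `s`. -/
def contractExcept [DecidableEq σ] (L : σ → ℂ[X] →ₗ[ℂ] ℂ) (s : σ) :
    MvPolynomial σ ℂ →ₗ[ℂ] ℂ[X] :=
  (MvPolynomial.basisMonomials σ ℂ).constr ℂ fun m =>
    (∏ v ∈ Finset.univ.erase s, L v (Polynomial.X ^ m v)) • Polynomial.X ^ m s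

theorem contract_monomial (L : σ → ℂ[X] →ₗ[ℂ] ℂ) (m : σ →₀ ℕ) (a : ℂ) :
    contract L (MvPolynomial.monomial m a) = a * ∏ v, L v (Polynomial.X ^ m v) := by
  have h : contract L (MvPolynomial.monomial m 1) = ∏ v, L v (Polynomial.X ^ m v) :=
    (MvPolynomial.basisMonomials σ ℂ).constr_basis ℂ _ m
  rw [← h, ← smul_eq_mul, ← map_smul, MvPolynomial.smul_monomial, smul_eq_mul, mul_one]

theorem contractExcept_monomial [DecidableEq σ] (L : σ → ℂ[X] →ₗ[ℂ] ℂ) (s : σ) (m : σ →₀ ℕ)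
    (a : ℂ) :
    contractExcept L s (MvPolynomial.monomial m a) =
      (a * ∏ v ∈ Finset.univ.erase s, L v (Polynomial.X ^ m v)) • Polynomial.X ^ m s := by
  have h : contractExcept L s (MvPolynomial.monomial m 1) =
      (∏ v ∈ Finset.univ.erase s, L v (Polynomial.X ^ m v)) • Polynomial.X ^ m s :=
    (MvPolynomial.basisMonomials σ ℂ).constr_basis ℂ _ m
  rw [mul_smul, ← h, ← map_smul, MvPolynomial.smul_monomial, smul_eq_mul, mul_one]

theorem contract_leval (z : σ → ℂ) (P : MvPolynomial σ ℂ) :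
    contract (fun v => leval (z v)) P = MvPolynomial.eval z P := by
  induction P using MvPolynomial.induction_on' with
  | monomial m a => simp [contract_monomial, MvPolynomial.eval_monomial, Finsupp.prod_fintype]
  | add P Q hP hQ => rw [map_add, map_add, hP, hQ]

theorem apply_contractExcept [DecidableEq σ] (L : σ → ℂ[X] →ₗ[ℂ] ℂ) (s : σ)
    (M : ℂ[X] →ₗ[ℂ] ℂ) (P : MvPolynomial σ ℂ) :
    M (contractExcept L s P) = contract (Function.update L s M) P := by
  induction P using MvPolynomial.induction_on' with
  | monomial m a =>
    have hrest : ∏ v ∈ Finset.univ.erase s, Function.update L s M v (Polynomial.X ^ m v) =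
        ∏ v ∈ Finset.univ.erase s, L v (Polynomial.X ^ m v) :=
      Finset.prod_congr rfl fun v hv => by
        rw [Function.update_of_ne (Finset.ne_of_mem_erase hv)]
    rw [contractExcept_monomial, contract_monomial, map_smul, smul_eq_mul, mul_assoc,
      ← Finset.prod_erase_mul _ _ (Finset.mem_univ s), hrest, Function.update_self]
  | add P Q hP hQ => rw [map_add, map_add, map_add, hP, hQ]

theorem natDegree_contractExcept_le [DecidableEq σ] (L : σ → ℂ[X] →ₗ[ℂ] ℂ) (s : σ)
    (P : MvPolynomial σ ℂ) : (contractExcept L s P).natDegree ≤ P.degreeOf s := by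
  conv_lhs => rw [P.as_sum, map_sum]
  refine Polynomial.natDegree_sum_le_of_forall_le _ _ fun m hm => ?_
  rw [contractExcept_monomial]
  exact (Polynomial.natDegree_smul_le _ _).trans <|
    (Polynomial.natDegree_X_pow_le _).trans (MvPolynomial.monomial_le_degreeOf s hm)

/- Evaluations at points of the upper half-plane are replaced by the functionals `L v` one variable
at a time: before each replacement the polynomial in the current variable is stable. -/
theorem IsMvStable.contract_ne_zero {P : MvPolynomial σ ℂ} (hP : IsMvStable P)
    {L : σ → ℂ[X] →ₗ[ℂ] ℂ} (hL : ∀ v, NonvanishingOnStable (L v)) : contract L P ≠ 0 := by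
  suffices h : ∀ (I : Finset σ) (z : σ → ℂ), (∀ v, 0 < (z v).im) →
      contract (fun v => if v ∈ I then L v else leval (z v)) P ≠ 0 by
    simpa using h Finset.univ (fun _ => Complex.I) (by simp)
  intro I
  induction I using Finset.induction_on with
  | empty =>
    intro z hz
    simpa [contract_leval] using hP z hz
  | insert s I hs ih =>
    intro z hz
    set N : σ → ℂ[X] →ₗ[ℂ] ℂ := fun v => if v ∈ I then L v else leval (z v)
    have hstable : IsStable (contractExcept N s P) := by
      intro x hx
      have hupdate : Function.update N s (leval x) =
          fun v => if v ∈ I then L v else leval (Function.update z s x v) := by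
        ext1 v
        by_cases hv : v = s
        · subst hv; simp [hs]
        · simp [N, hv]
      rw [← Polynomial.leval_apply, apply_contractExcept, hupdate]
      refine ih _ fun v => ?_
      by_cases hv : v = s
      · subst hv; simpa using hx
      · simpa [hv] using hz v
    have hupdate : Function.update N s (L s) =
        fun v => if v ∈ insert s I then L v else leval (z v) := by
      ext1 v
      by_cases hv : v = s
      · subst hv; simp
      · simp [N, hv]
    rw [← hupdate, ← apply_contractExcept]
    exact hL s _ hstable

theorem IsMvStable.isStable_contractExcept [DecidableEq σ] {P : MvPolynomial σ ℂ}
    (hP : IsMvStable P) {L : σ → ℂ[X] →ₗ[ℂ] ℂ} {s : σ} (hL : ∀ v ≠ s, NonvanishingOnStable (L v)) :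
    IsStable (contractExcept L s P) := by
  intro x hx
  rw [← Polynomial.leval_apply, apply_contractExcept]
  refine hP.contract_ne_zero fun v => ?_
  by_cases hv : v = s
  · subst hv
    simpa using nonvanishingOnStable_leval hx
  · simpa [hv] using hL v hv

theorem tendsto_contract {α : Type*} {l : Filter α} {M : α → σ → ℂ[X] →ₗ[ℂ] ℂ}
    {L : σ → ℂ[X] →ₗ[ℂ] ℂ} (hM : ∀ v p, Tendsto (fun a => M a v p) l (𝓝 (L v p)))
    (P : MvPolynomial σ ℂ) : Tendsto (fun a => contract (M a) P) l (𝓝 (contract L P)) := by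
  induction P using MvPolynomial.induction_on' with
  | monomial m c =>
    simp only [contract_monomial]
    exact (tendsto_finsetProd _ fun v _ => hM v _).const_mul c
  | add P Q hP hQ => simpa only [map_add] using hP.add hQ

theorem IsMvStable.contractExcept_eq_zero_or_isStable [DecidableEq σ] {P : MvPolynomial σ ℂ}
    (hP : IsMvStable P) {L : σ → ℂ[X] →ₗ[ℂ] ℂ} {s : σ} (hL : ∀ v ≠ s, IsLimitOfNonvanishing (L v)) :
    contractExcept L s P = 0 ∨ IsStable (contractExcept L s P) := by
  choose! M hM hlim using hL
  refine eq_zero_or_isStable_of_tendsto (l := 𝓝[>] (0 : ℝ))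
    (Q := fun ε => contractExcept (fun v => M v ε) s P) (d := P.degreeOf s) ?_
    (.of_forall fun ε => natDegree_contractExcept_le _ s P) fun x => ?_
  · filter_upwards [self_mem_nhdsWithin] with ε hε
    exact hP.isStable_contractExcept fun v hv => hM v hv ε hε
  · simp only [← Polynomial.leval_apply, apply_contractExcept]
    refine tendsto_contract (fun v p => ?_) P
    by_cases hv : v = s
    · subst hv; simp
    · simpa [hv] using hlim v hv p

end Multivariate

/-! ### Set functions with stable generating polynomial -/

section GeneratingPolynomial

open Polynomial (leval lcoeff)
open scoped Function Polynomial Finset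

variable {E ι : Type*}

/-- The multiaffine generating polynomial `∑ B, w B ∏ e ∈ B, x_e` of a weighted family of sets. -/
def genPoly [Fintype E] (w : Finset E → ℝ) : MvPolynomial E ℂ :=
  ∑ B, MvPolynomial.C (w B : ℂ) * ∏ e ∈ B, MvPolynomial.X e

/-- The index of the block of the family `D` containing `e`, and `none` if there is no such
block. -/
def blockIndex (D : ι → Finset E) (e : E) : Option ι :=
  if h : ∃ i, e ∈ D i then some h.choose else none

theorem blockIndex_eq_some_iff {D : ι → Finset E} (hD : Pairwise (Disjoint on D))
    {e : E} {i : ι} : blockIndex D e = some i ↔ e ∈ D i := by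
  rw [blockIndex]
  split_ifs with h
  · rw [Option.some_inj]
    refine ⟨fun hi => hi ▸ h.choose_spec, fun hi => ?_⟩
    by_contra hne
    exact Finset.disjoint_left.1 (hD hne) h.choose_spec hi
  · exact ⟨(nomatch ·), fun hi => (h ⟨i, hi⟩).elim⟩

theorem card_filter_blockIndex {D : ι → Finset E} (hD : Pairwise (Disjoint on D))
    (B : Finset E) (i : ι) : #{e ∈ B | blockIndex D e = some i} = #(B ∩ D i) := by
  simp only [blockIndex_eq_some_iff hD, Finset.filter_mem_eq_inter]

theorem contract_rename_genPoly [Fintype E] {τ : Type*} [Fintype τ] (L : τ → ℂ[X] →ₗ[ℂ] ℂ)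
    (f : E → τ) (w : Finset E → ℝ) :
    contract L (MvPolynomial.rename f (genPoly w)) =
      ∑ B, (w B : ℂ) * ∏ v, L v (Polynomial.X ^ #{e ∈ B | f e = v}) := by
  rw [genPoly, map_sum, map_sum]
  refine Finset.sum_congr rfl fun B _ => ?_
  have hmonomial : MvPolynomial.rename f (MvPolynomial.C (w B : ℂ) * ∏ e ∈ B, MvPolynomial.X e) =
      MvPolynomial.monomial (∑ e ∈ B, Finsupp.single (f e) 1) (w B : ℂ) := by
    rw [MvPolynomial.monomial_sum_index, map_mul, MvPolynomial.rename_C, map_prod]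
    simp only [MvPolynomial.rename_X]
    rfl
  rw [hmonomial, contract_monomial]
  simp only [Finsupp.finsetSum_apply, Finsupp.single_apply, Finset.card_filter]

/-- Extraction of the coefficient of degree `c i` in the variable of each block `i`, and evaluation
at `1` in the variable shared by the elements outside all blocks. -/
def blockFunctional (c : ι → ℕ) : Option ι → ℂ[X] →ₗ[ℂ] ℂ
  | none => leval 1
  | some i => lcoeff ℂ (c i)

theorem isLimitOfNonvanishing_blockFunctional (c : ι → ℕ) (o : Option ι) :
    IsLimitOfNonvanishing (blockFunctional c o) :=
  match o with
  | none => by simpa [blockFunctional] using isLimitOfNonvanishing_leval 1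
  | some i => isLimitOfNonvanishing_lcoeff (c i)

variable [Fintype E] [Fintype ι]

/-- The total weight of the sets meeting each block `D i` in exactly `c i` elements. -/
def blockSum (w : Finset E → ℝ) (D : ι → Finset E) (c : ι → ℕ) : ℝ :=
  ∑ B with ∀ i, #(B ∩ D i) = c i, w B

theorem contract_blockFunctional (w : Finset E → ℝ) {D : ι → Finset E}
    (hD : Pairwise (Disjoint on D)) (c : ι → ℕ) :
    contract (blockFunctional c) (MvPolynomial.rename (blockIndex D) (genPoly w)) =
      blockSum w D c := by
  rw [contract_rename_genPoly, blockSum, Finset.sum_filter, Complex.ofReal_sum]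
  refine Finset.sum_congr rfl fun B _ => ?_
  simp [Fintype.prod_option, blockFunctional, card_filter_blockIndex hD, Polynomial.coeff_X_pow,
    Finset.prod_ite_zero, eq_comm, apply_ite Complex.ofReal]

theorem coeff_contractExcept_blockFunctional [DecidableEq ι] (w : Finset E → ℝ)
    {D : ι → Finset E} (hD : Pairwise (Disjoint on D)) (c : ι → ℕ) (s : ι) (j : ℕ) :
    (contractExcept (blockFunctional c) (some s)
      (MvPolynomial.rename (blockIndex D) (genPoly w))).coeff j =
        blockSum w D (Function.update c s j) := by
  have hupdate : Function.update (blockFunctional c) (some s) (lcoeff ℂ j) =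
      blockFunctional (Function.update c s j) := by
    ext1 o
    rcases o with _ | i
    · simp [blockFunctional]
    · by_cases hi : i = s
      · subst hi; simp [blockFunctional]
      · simp [blockFunctional, hi]
  rw [← contract_blockFunctional w hD, ← hupdate, ← apply_contractExcept, Polynomial.lcoeff_apply]

theorem exists_splits_coeff_eq_blockSum [DecidableEq ι] {w : Finset E → ℝ}
    (hw : IsMvStable (genPoly w)) {D : ι → Finset E} (hD : Pairwise (Disjoint on D))
    (c : ι → ℕ) (s : ι) :
    ∃ q : ℝ[X], q.Splits ∧ ∀ j, q.coeff j = blockSum w D (Function.update c s j) := by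
  set p := contractExcept (blockFunctional c) (some s)
    (MvPolynomial.rename (blockIndex D) (genPoly w))
  obtain ⟨q, hq⟩ : p ∈ Polynomial.lifts Complex.ofRealHom :=
    (Polynomial.lifts_iff_coeff_lifts p).2 fun j =>
      ⟨_, (coeff_contractExcept_blockFunctional w hD c s j).symm⟩
  rw [Polynomial.coe_mapRingHom] at hq
  refine ⟨q, ?_, fun j => ?_⟩
  · rcases (hw.rename _).contractExcept_eq_zero_or_isStable
      fun v _ => isLimitOfNonvanishing_blockFunctional c v with h0 | hstable
    · have hq0 : q.map Complex.ofRealHom = 0 := hq.trans h0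
      rw [(Polynomial.map_eq_zero _).1 hq0]
      exact .zero
    · exact splits_of_isStable_map (hq.symm ▸ hstable)
  · have hcoeff := coeff_contractExcept_blockFunctional w hD c s j
    change p.coeff j = _ at hcoeff
    rw [← hq, Polynomial.coeff_map] at hcoeff
    exact Complex.ofReal_injective hcoeff

theorem blockSum_eq_zero_of_card_lt (w : Finset E → ℝ) {D : ι → Finset E} {c : ι → ℕ} {s : ι}
    (h : #(D s) < c s) : blockSum w D c = 0 := by
  rw [blockSum, Finset.filter_false_of_mem, Finset.sum_empty]
  intro B _ hB
  exact h.not_ge (hB s ▸ Finset.card_le_card Finset.inter_subset_right)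

theorem blockSum_div_choose_logConcave [DecidableEq ι] {w : Finset E → ℝ}
    (hw : IsMvStable (genPoly w)) {D : ι → Finset E} (hD : Pairwise (Disjoint on D)) (c : ι → ℕ)
    (s : ι) {j : ℕ} (hj : j + 2 ≤ #(D s)) :
    (blockSum w D (Function.update c s j) / (#(D s)).choose j) *
        (blockSum w D (Function.update c s (j + 2)) / (#(D s)).choose (j + 2)) ≤
      (blockSum w D (Function.update c s (j + 1)) / (#(D s)).choose (j + 1)) ^ 2 := by
  obtain ⟨q, hq, hcoeff⟩ := exists_splits_coeff_eq_blockSum hw hD c s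
  have hdeg : q.natDegree ≤ #(D s) := Polynomial.natDegree_le_iff_coeff_eq_zero.2 fun i hi => by
    rw [hcoeff]
    exact blockSum_eq_zero_of_card_lt w (s := s) (by simpa using hi)
  simpa only [normalizedCoeff, hcoeff] using normalizedCoeff_mul_le_sq_of_splits hq hdeg hj

end GeneratingPolynomial

/-! ### The Cauchy–Binet formula -/

section CauchyBinet

open scoped Matrix Finset

variable {R n E : Type*} [CommRing R] [Fintype n] [DecidableEq n]

theorem det_mul_eq_sum_prod_mul_det [Fintype E] (M : Matrix n E R) (N : Matrix E n R) :
    (M * N).det = ∑ f : n → E, (∏ i, N (f i) i) * (M.submatrix id f).det := by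
  simp only [Matrix.det_apply', Matrix.mul_apply, Finset.prod_univ_sum, Fintype.piFinset_univ,
    Finset.mul_sum, Matrix.submatrix_apply, id]
  rw [Finset.sum_comm]
  refine Finset.sum_congr rfl fun f _ => Finset.sum_congr rfl fun σ _ => ?_
  rw [Finset.prod_mul_distrib]
  ring

theorem injective_of_det_submatrix_ne_zero {M : Matrix n E R} {f : n → E}
    (hf : (M.submatrix id f).det ≠ 0) : Function.Injective f := fun i j hij => by
  by_contra hne
  exact hf (Matrix.det_zero_of_column_eq hne fun a => by simp [hij])

theorem det_mul_submatrix_eq_sum [Fintype E] (M : Matrix n E R) (N : Matrix E n R)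
    (B : Finset E) :
    (M.submatrix id (Subtype.val : B → E) * N.submatrix (Subtype.val : B → E) id).det =
      ∑ f : n → E with ∀ i, f i ∈ B, (∏ i, N (f i) i) * (M.submatrix id f).det := by
  rw [det_mul_eq_sum_prod_mul_det]
  refine Finset.sum_nbij (fun g i => (g i : E)) (fun g _ => by simp)
    (fun g _ g' _ h => funext fun i => Subtype.ext (congrFun h i)) (fun f hf => ?_) fun g _ => rfl
  exact ⟨fun i => ⟨f i, (Finset.mem_filter.1 hf).2 i⟩, by simp, rfl⟩

/- The Cauchy–Binet formula: an injective `f : n → E` takes its values in exactly one set of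
the cardinality of `n`. -/
theorem det_mul_eq_sum_det_mul_submatrix [Fintype E] (M : Matrix n E R) (N : Matrix E n R) :
    (M * N).det = ∑ B : Finset E with #B = Fintype.card n,
      (M.submatrix id (Subtype.val : B → E) * N.submatrix (Subtype.val : B → E) id).det := by
  simp only [det_mul_submatrix_eq_sum, Finset.sum_filter (fun _ : n → E => _)]
  rw [Finset.sum_comm, det_mul_eq_sum_prod_mul_det]
  refine Finset.sum_congr rfl fun f _ => ?_
  rcases eq_or_ne (M.submatrix id f).det 0 with h0 | h0
  · simp [h0]
  have hcard : #(Finset.univ.image f) = Fintype.card n :=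
    Finset.card_image_of_injective _ (injective_of_det_submatrix_ne_zero h0)
  rw [Finset.sum_eq_single_of_mem (Finset.univ.image f) (by simpa using hcard)]
  · simp
  · intro B hB hne
    refine if_neg fun hmem => hne (Finset.eq_of_subset_of_card_le ?_ ?_).symm
    · exact Finset.image_subset_iff.2 fun i _ => hmem i
    · rw [hcard, (Finset.mem_filter.1 hB).2]

end CauchyBinet

/-! ### Matrices with unimodular minors -/

section UnimodularMinors

open scoped Function Matrix Finset

variable {r : ℕ} {E : Type*}

theorem isColBasis_iff_of_equiv {F : Type*} [Field F] (A : Matrix (Fin r) E F) {B : Finset E}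
    (g : Fin r ≃ B) : IsColBasis A B ↔ (A.submatrix id fun i => (g i : E)).det ≠ 0 := by
  refine ⟨fun ⟨g', hg'⟩ => ?_, fun h => ⟨g, h⟩⟩
  have hperm : A.submatrix id (fun i => (g' i : E)) =
      (A.submatrix id fun i => (g i : E)).submatrix id (g'.trans g.symm) := by
    ext; simp
  rw [hperm, Matrix.det_permute'] at hg'
  exact right_ne_zero_of_mul hg'

theorem IsColBasis.card_eq {F : Type*} [Field F] {A : Matrix (Fin r) E F} {B : Finset E}
    (hB : IsColBasis A B) : #B = r := by
  obtain ⟨g, -⟩ := hB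
  simpa using (Fintype.card_congr g).symm

/-- All maximal minors of the matrix are zero or of absolute value one. Totally unimodular real
matrices and the matrices representing sixth-root-of-unity matroids have this property. -/
def HasUnimodularMinors (A : Matrix (Fin r) E ℂ) : Prop :=
  ∀ f : Fin r → E, (A.submatrix id f).det = 0 ∨ ‖(A.submatrix id f).det‖ = 1

theorem HasUnimodularMinors.det_submatrix_mul {A : Matrix (Fin r) E ℂ}
    (hA : HasUnimodularMinors A) [Fintype E] (z : E → ℂ) {B : Finset E} (hB : #B = r) :
    (A.submatrix id (Subtype.val : B → E) *
      (Matrix.diagonal z * Aᴴ).submatrix (Subtype.val : B → E) id).det =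
        if IsColBasis A B then ∏ e ∈ B, z e else 0 := by
  let g : Fin r ≃ B := (B.equivFinOfCardEq hB).symm
  set A' := A.submatrix id fun i => (g i : E) with hA'
  have hsplit : A.submatrix id (Subtype.val : B → E) *
      (Matrix.diagonal z * Aᴴ).submatrix (Subtype.val : B → E) id =
        A' * (Matrix.diagonal (fun i => z (g i)) * A'ᴴ) := by
    rw [← Matrix.submatrix_id_id (A.submatrix _ _ * _), ← Matrix.submatrix_mul_equiv _ _ id g id]
    congr 1
    ext i k
    simp [hA', Matrix.diagonal_mul]
  have hprod : ∏ i, z (g i) = ∏ e ∈ B, z e := by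
    rw [Equiv.prod_comp g fun e : B => z e, Finset.prod_coe_sort]
  rw [hsplit, Matrix.det_mul, Matrix.det_mul, Matrix.det_diagonal, hprod,
    Matrix.det_conjTranspose]
  rcases hA fun i => (g i : E) with h0 | h1
  · rw [if_neg ((isColBasis_iff_of_equiv A g).not.2 (not_not.2 h0)), hA', h0, zero_mul]
  · have hbasis : IsColBasis A B :=
      (isColBasis_iff_of_equiv A g).2 (norm_ne_zero_iff.1 (h1.symm ▸ one_ne_zero))
    have hconj : A'.det * star A'.det = 1 := by
      rw [RCLike.star_def, Complex.mul_conj', hA', h1]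
      simp
    rw [if_pos hbasis, mul_left_comm, hconj, mul_one]

/-- The indicator function of the set of bases of the column matroid of `A`. -/
def basisIndicator {F : Type*} [Field F] (A : Matrix (Fin r) E F) (B : Finset E) : ℝ :=
  if IsColBasis A B then 1 else 0

theorem HasUnimodularMinors.det_mul_diagonal_mul_conjTranspose [Fintype E]
    {A : Matrix (Fin r) E ℂ} (hA : HasUnimodularMinors A) (z : E → ℂ) :
    (A * (Matrix.diagonal z * Aᴴ)).det =
      MvPolynomial.eval z (genPoly (basisIndicator A)) := by
  rw [det_mul_eq_sum_det_mul_submatrix, Finset.sum_filter, genPoly, map_sum]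
  refine Finset.sum_congr rfl fun B _ => ?_
  rw [Fintype.card_fin, map_mul, MvPolynomial.eval_C, map_prod]
  simp only [MvPolynomial.eval_X, basisIndicator]
  split_ifs with hcard hB hB
  · rw [hA.det_submatrix_mul z hcard, if_pos hB]
    simp
  · rw [hA.det_submatrix_mul z hcard, if_neg hB]
    simp
  · exact (hcard hB.card_eq).elim
  · simp

theorem IsColBasis.eq_zero_of_vecMul_eq_zero {F : Type*} [Field F] {A : Matrix (Fin r) E F}
    {B : Finset E} (hB : IsColBasis A B) {w : Fin r → F} (hw : w ᵥ* A = 0) : w = 0 := by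
  obtain ⟨g, hg⟩ := hB
  exact Matrix.eq_zero_of_vecMul_eq_zero hg (funext fun i => congrFun hw (g i))

/- If `w` is in the left kernel of `A * diagonal z * Aᴴ` and `u = w ᵥ* A`, then
`∑ e, z e * |u e| ^ 2 = 0`, and the imaginary part of this sum forces `u = 0`. -/
theorem det_mul_diagonal_mul_conjTranspose_ne_zero [Fintype E] {A : Matrix (Fin r) E ℂ}
    {B : Finset E} (hB : IsColBasis A B) {z : E → ℂ} (hz : ∀ e, 0 < (z e).im) :
    (A * (Matrix.diagonal z * Aᴴ)).det ≠ 0 := by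
  intro h0
  obtain ⟨w, hw, hw0⟩ := Matrix.exists_vecMul_eq_zero_iff.2 h0
  set u := w ᵥ* A
  have hsum : ∑ e, z e * (Complex.normSq (u e) : ℂ) = 0 := by
    have hdot : (w ᵥ* (A * (Matrix.diagonal z * Aᴴ))) ⬝ᵥ star w = 0 := by simp [hw0]
    rw [← Matrix.vecMul_vecMul, ← Matrix.vecMul_vecMul, ← Matrix.dotProduct_mulVec,
      ← Matrix.star_vecMul] at hdot
    rw [← hdot, dotProduct]
    refine Finset.sum_congr rfl fun e _ => ?_
    rw [Matrix.vecMul_diagonal, Pi.star_apply, RCLike.star_def, ← Complex.mul_conj]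
    ring
  have him : ∑ e, (z e).im * Complex.normSq (u e) = 0 := by
    simpa [Complex.im_sum] using congrArg Complex.im hsum
  rw [Finset.sum_eq_zero_iff_of_nonneg
    fun e _ => mul_nonneg (hz e).le (Complex.normSq_nonneg _)] at him
  refine hw (hB.eq_zero_of_vecMul_eq_zero (funext fun e => ?_))
  simpa [(hz e).ne'] using him e (Finset.mem_univ e)

theorem HasUnimodularMinors.isMvStable_genPoly [Fintype E] {A : Matrix (Fin r) E ℂ}
    (hA : HasUnimodularMinors A) {B : Finset E} (hB : IsColBasis A B) :
    IsMvStable (genPoly (basisIndicator A)) := fun z hz => by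
  rw [← hA.det_mul_diagonal_mul_conjTranspose]
  exact det_mul_diagonal_mul_conjTranspose_ne_zero hB hz

theorem blockSum_basisIndicator [Fintype E] {F : Type*} [Field F] (A : Matrix (Fin r) E F)
    {k : ℕ} (S : Finset E) (C : Fin k → Finset E) (c : Fin k → ℕ) (j : ℕ) :
    blockSum (basisIndicator A) (fun o : Option (Fin k) => o.elim S C)
      (Function.update (fun o => o.elim 0 c) none j) = basisCount A S C c j := by
  simp only [blockSum, basisIndicator, Finset.sum_boole, Finset.filter_filter, basisCount,
    Nat.card_eq_fintype_card, Fintype.card_subtype]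
  congr 2
  ext B
  simp [Option.forall, and_comm]

theorem isColBasis_map_iff {F K : Type*} [Field F] [Field K] (φ : F →+* K)
    (A : Matrix (Fin r) E F) (B : Finset E) : IsColBasis (A.map φ) B ↔ IsColBasis A B := by
  refine exists_congr fun g => ?_
  rw [Matrix.submatrix_map, ← RingHom.mapMatrix_apply, ← RingHom.map_det, map_ne_zero]

theorem basisCount_map [Fintype E] {F K : Type*} [Field F] [Field K] (φ : F →+* K)
    (A : Matrix (Fin r) E F) {k : ℕ} (S : Finset E) (C : Fin k → Finset E) (c : Fin k → ℕ)
    (j : ℕ) : basisCount (A.map φ) S C c j = basisCount A S C c j := by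
  simp only [basisCount, isColBasis_map_iff]

theorem basisCount_eq_zero [Fintype E] {F : Type*} [Field F] {A : Matrix (Fin r) E F}
    (hA : ∀ B, ¬ IsColBasis A B) {k : ℕ} (S : Finset E) (C : Fin k → Finset E) (c : Fin k → ℕ)
    (j : ℕ) : basisCount A S C c j = 0 := by
  simp [basisCount, hA]

theorem hasUnimodularMinors_map_ofReal {A : Matrix (Fin r) E ℝ} (hA : A.IsTotallyUnimodular) :
    HasUnimodularMinors (A.map Complex.ofRealHom) := fun f => by
  have hdet : ((A.map Complex.ofRealHom).submatrix id f).det = ((A.submatrix id f).det : ℂ) := by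
    rw [Matrix.submatrix_map, ← RingHom.mapMatrix_apply, ← RingHom.map_det,
      Complex.ofRealHom_eq_coe]
  rw [hdet]
  obtain ⟨s, hs⟩ := A.isTotallyUnimodular_iff.1 hA r id f
  rw [← hs]
  cases s <;> simp

theorem stanley_regular_matroid_logconcave_general [Fintype E] (A : Matrix (Fin r) E ℂ)
    (hA : HasUnimodularMinors A) {k : ℕ} (S : Finset E) (C : Fin k → Finset E) (c : Fin k → ℕ)
    (hSC : ∀ i, Disjoint S (C i)) (hCC : ∀ i j : Fin k, i ≠ j → Disjoint (C i) (C j))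
    (j : ℕ) (hj1 : 1 ≤ j) (hj2 : j + 1 ≤ S.card) :
    ((basisCount A S C c j : ℝ) / (S.card.choose j : ℝ)) ^ 2 ≥
      ((basisCount A S C c (j - 1) : ℝ) / (S.card.choose (j - 1) : ℝ)) *
        ((basisCount A S C c (j + 1) : ℝ) / (S.card.choose (j + 1) : ℝ)) := by
  by_cases hbasis : ∃ B, IsColBasis A B
  · obtain ⟨B, hB⟩ := hbasis
    obtain ⟨i, rfl⟩ := Nat.exists_eq_add_of_le' hj1
    have hdisj : Pairwise (Disjoint on fun o : Option (Fin k) => o.elim S C) := by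
      rintro (_ | a) (_ | b) hab
      · exact (hab rfl).elim
      · exact hSC b
      · exact (hSC a).symm
      · exact hCC a b fun h => hab (congrArg some h)
    have h := blockSum_div_choose_logConcave (hA.isMvStable_genPoly hB) hdisj
      (fun o => o.elim 0 c) none hj2
    simp only [blockSum_basisIndicator] at h
    exact h
  · simp [basisCount_eq_zero (not_exists.1 hbasis)]

end UnimodularMinors

/-- Stanley's theorem (1981): for a regular matroid, represented as the column matroid of a
totally unimodular real matrix `A` of full row rank `r`, a partition
`π = (S, T, C_1, …, C_k)` of the ground set into pairwise disjoint nonempty parts, and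
nonnegative integers `c_1, …, c_k`, the numbers `M_j(π)` satisfy
`M_j(π)²/C(|S|,j)² ≥ (M_{j-1}(π)/C(|S|,j-1))·(M_{j+1}(π)/C(|S|,j+1))` for `1 ≤ j ≤ |S|-1`. -/
theorem stanley_regular_matroid_logconcave {r : ℕ} {E : Type*} [Fintype E]
    (A : Matrix (Fin r) E ℝ) (hrank : A.rank = r) (hTU : A.IsTotallyUnimodular)
    (k : ℕ) (S T : Finset E) (C : Fin k → Finset E) (c : Fin k → ℕ)
    (hS : S.Nonempty) (hT : T.Nonempty) (hC : ∀ i, (C i).Nonempty)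
    (hST : Disjoint S T) (hSC : ∀ i, Disjoint S (C i)) (hTC : ∀ i, Disjoint T (C i))
    (hCC : ∀ i j : Fin k, i ≠ j → Disjoint (C i) (C j))
    (hcover : S ∪ T ∪ Finset.univ.biUnion C = Finset.univ)
    (j : ℕ) (hj1 : 1 ≤ j) (hj2 : j + 1 ≤ S.card) :
    ((basisCount A S C c j : ℝ) / (S.card.choose j : ℝ)) ^ 2 ≥
      ((basisCount A S C c (j - 1) : ℝ) / (S.card.choose (j - 1) : ℝ)) *
        ((basisCount A S C c (j + 1) : ℝ) / (S.card.choose (j + 1) : ℝ)) := by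
  simpa only [basisCount_map] using stanley_regular_matroid_logconcave_general
    (A.map Complex.ofRealHom) (hasUnimodularMinors_map_ofReal hTU) S C c hSC hCC j hj1 hj2
end
end

section
/- Let A be a complex r×E matrix of full row rank r (columns indexed by the finite set E) such that every nonzero minor of A (determinant of a square submatrix of any size) is a sixth root of unity, and let M be the matroid on E whose bases are the r-element subsets S ⊆ E such that det A[S] ≠ 0, where A[S] is the square submatrix of A on the columns S. Then M has the half-plane property: for every y : E → ℂ with Re(y_e) > 0 for all e ∈ E, the sum ∑_{B basis of M} ∏_{e∈B} y_e is nonzero. -/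
open scoped BigOperators
open Classical

noncomputable section

/-!
Write `Y` for the diagonal matrix with entries `y e`. By the Cauchy–Binet formula
`det (A Y A*) = ∑ B, |det A[B]|² y^B`, so if all nonzero maximal minors of `A` have the same
absolute value, as roots of unity do, this determinant is a multiple of the basis generating
polynomial at `y`. It is nonzero because `A Y A*` has trivial kernel: for `x ≠ 0` the vector
`w = A* x` is nonzero, the rows of `A` being independent, and
`Re (x* A Y A* x) = ∑ e, Re (y e) |w e|² > 0`.
-/

section CauchyBinet

open Equiv Fintype Function Finset Matrix

variable {m n R : Type*} [Fintype m]

theorem bijective_sigma_perm_embedding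
    (e : ∀ B : {B : Finset n // #B = card m}, m ≃ B.1) :
    Bijective fun x : Σ _ : {B : Finset n // #B = card m}, Perm m ↦
      (x.2.trans (e x.1)).toEmbedding.trans (Embedding.subtype (· ∈ x.1.1)) := by
  constructor
  · rintro ⟨B, σ⟩ ⟨C, τ⟩ h
    have apply_eq (i : m) : (e B (σ i) : n) = e C (τ i) := DFunLike.congr_fun h i
    have B_subset_C : B.1 ⊆ C.1 := fun b hb ↦ by
      simpa [← apply_eq] using (e C (τ (σ.symm ((e B).symm ⟨b, hb⟩)))).2
    obtain rfl : B = C := Subtype.ext (eq_of_subset_of_card_le B_subset_C (by rw [B.2, C.2]))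
    obtain rfl : σ = τ := Equiv.ext fun i ↦ (e B).injective (Subtype.ext (apply_eq i))
    rfl
  · intro f
    let B : {B : Finset n // #B = card m} := ⟨univ.map f, card_map f⟩
    have f_mem (i : m) : f i ∈ B.1 := mem_map_of_mem f (mem_univ i)
    have bijective : Bijective fun i ↦ (e B).symm ⟨f i, f_mem i⟩ :=
      Finite.injective_iff_bijective.1 fun i j h ↦ by simpa using h
    exact ⟨⟨B, Equiv.ofBijective _ bijective⟩, by ext; simp⟩

variable [DecidableEq m] [Fintype n] [CommRing R]

theorem det_mul_eq_sum_fun (M : Matrix m n R) (N : Matrix n m R) :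
    (M * N).det = ∑ p : m → n, (∏ i, M i (p i)) * (N.submatrix p id).det := by
  have row_eq : M * N = fun i ↦ ∑ j, M i j • N.row j := by
    ext i k
    simp [mul_apply]
  calc (M * N).det = detRowAlternating fun i ↦ ∑ j, M i j • N.row j := congrArg det row_eq
    _ = ∑ p : m → n, detRowAlternating fun i ↦ M i (p i) • N.row (p i) :=
      detRowAlternating.toMultilinearMap.map_sum _
    _ = ∑ p : m → n, (∏ i, M i (p i)) * (N.submatrix p id).det :=
      sum_congr rfl fun p _ ↦ detRowAlternating.toMultilinearMap.map_smul_univ _ _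

theorem det_mul_eq_sum_embedding (M : Matrix m n R) (N : Matrix n m R) :
    (M * N).det = ∑ f : m ↪ n, (∏ i, M i (f i)) * (N.submatrix f id).det := by
  rw [det_mul_eq_sum_fun]
  refine (sum_of_injective _ DFunLike.coe_injective _ _ (fun p hp ↦ ?_) fun _ ↦ rfl).symm
  have p_not_injective : ¬ Injective p := fun h ↦ hp ⟨⟨p, h⟩, rfl⟩
  obtain ⟨i, j, hij, i_ne_j⟩ := not_injective_iff.1 p_not_injective
  rw [det_zero_of_row_eq i_ne_j (by ext; simp [hij]), mul_zero]

theorem det_mul_eq_sum_det_mul_det (M : Matrix m n R) (N : Matrix n m R)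
    (e : ∀ B : {B : Finset n // #B = card m}, m ≃ B.1) :
    (M * N).det = ∑ B, (M.submatrix id fun i ↦ (e B i : n)).det *
      (N.submatrix (fun i ↦ (e B i : n)) id).det := by
  rw [det_mul_eq_sum_embedding, ← (bijective_sigma_perm_embedding e).sum_comp, Fintype.sum_sigma]
  refine sum_congr rfl fun B _ ↦ ?_
  have det_permute_rows (σ : Perm m) : (N.submatrix (fun i ↦ (e B (σ i) : n)) id).det =
      Perm.sign σ * (N.submatrix (fun i ↦ (e B i : n)) id).det :=
    det_permute σ (N.submatrix (fun i ↦ (e B i : n)) id)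
  rw [← det_transpose (M.submatrix _ _), det_apply', sum_mul]
  refine sum_congr rfl fun σ _ ↦ ?_
  calc (∏ i, M i (e B (σ i))) * (N.submatrix (fun i ↦ (e B (σ i) : n)) id).det
    _ = (∏ i, M i (e B (σ i))) *
        (Perm.sign σ * (N.submatrix (fun i ↦ (e B i : n)) id).det) := by rw [det_permute_rows]
    _ = Perm.sign σ * (∏ i, M i (e B (σ i))) *
        (N.submatrix (fun i ↦ (e B i : n)) id).det := by ring

theorem det_mul_diagonal_mul_conjTranspose [DecidableEq n] [StarRing R] (A : Matrix m n R)
    (y : n → R) (e : ∀ B : {B : Finset n // #B = card m}, m ≃ B.1) :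
    (A * diagonal y * Aᴴ).det = ∑ B, (A.submatrix id fun i ↦ (e B i : n)).det *
      star (A.submatrix id fun i ↦ (e B i : n)).det * ∏ b ∈ B.1, y b := by
  rw [det_mul_eq_sum_det_mul_det _ _ e]
  refine sum_congr rfl fun B _ ↦ ?_
  have scaled_columns : (A * diagonal y).submatrix id (fun i ↦ (e B i : n)) =
      A.submatrix id (fun i ↦ (e B i : n)) * diagonal fun i ↦ y (e B i) := by
    ext
    simp
  have prod_eq : ∏ i, y (e B i) = ∏ b ∈ B.1, y b := by
    rw [(e B).prod_comp fun b ↦ y b, prod_coe_sort]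
  rw [scaled_columns, det_mul, det_diagonal, prod_eq, ← conjTranspose_submatrix,
    det_conjTranspose, mul_right_comm]

end CauchyBinet

section ColBasis

open Finset Matrix

variable {r : ℕ} {E F : Type*} [Field F] {A : Matrix (Fin r) E F} {B : Finset E}

theorem IsColBasis.card_eq_s3 (hB : IsColBasis A B) : #B = r := by
  obtain ⟨g, -⟩ := hB
  simpa using (Fintype.card_congr g).symm

theorem isColBasis_iff_det_ne_zero (g : Fin r ≃ B) :
    IsColBasis A B ↔ (A.submatrix id fun i ↦ (g i : E)).det ≠ 0 := by
  refine ⟨fun ⟨h, det_ne_zero⟩ det_eq_zero ↦ det_ne_zero ?_, fun det_ne_zero ↦ ⟨g, det_ne_zero⟩⟩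
  have det_reindex := det_permute' (h.trans g.symm) (A.submatrix id fun i ↦ (g i : E))
  simpa [submatrix_submatrix, Function.comp_def, det_eq_zero] using det_reindex

theorem sum_isColBasis_eq_sum_card_eq [Fintype E] {R : Type*} [AddCommMonoid R]
    (A : Matrix (Fin r) E F) (w : Finset E → R) :
    (∑ B, if IsColBasis A B then w B else 0) =
      ∑ B : {B : Finset E // #B = Fintype.card (Fin r)}, if IsColBasis A B.1 then w B else 0 := by
  refine (Fintype.sum_of_injective _ Subtype.val_injective _ _ (fun B hB ↦ ?_) fun _ ↦ rfl).symm
  exact if_neg fun h ↦ hB ⟨⟨B, by simpa using h.card_eq_s3⟩, rfl⟩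

end ColBasis

section HalfPlane

open Finset Matrix

variable {𝕜 m n : Type*} [RCLike 𝕜] [Fintype m]

theorem det_ne_zero_of_re_dotProduct_mulVec_pos [DecidableEq m] {M : Matrix m m 𝕜}
    (hM : ∀ x ≠ 0, 0 < RCLike.re (star x ⬝ᵥ M *ᵥ x)) : M.det ≠ 0 := by
  intro det_eq_zero
  obtain ⟨x, x_ne_zero, hx⟩ := exists_mulVec_eq_zero_iff.2 det_eq_zero
  simpa [hx] using hM x x_ne_zero

variable [Fintype n]

theorem linearIndependent_row_of_rank_eq_card {K : Type*} [Field K] {A : Matrix m n K}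
    (hA : A.rank = Fintype.card m) : LinearIndependent K A.row := by
  rw [linearIndependent_iff_card_eq_finrank_span, Set.finrank, ← rank_eq_finrank_span_row, hA]

variable [DecidableEq n]

theorem re_dotProduct_mul_diagonal_mul_conjTranspose_mulVec (A : Matrix m n 𝕜) (y : n → 𝕜)
    (x : m → 𝕜) :
    RCLike.re (star x ⬝ᵥ (A * diagonal y * Aᴴ) *ᵥ x) =
      ∑ j, RCLike.re (y j) * ‖(Aᴴ *ᵥ x) j‖ ^ 2 := by
  have quadratic_form : star x ⬝ᵥ (A * diagonal y * Aᴴ) *ᵥ x =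
      star (Aᴴ *ᵥ x) ⬝ᵥ diagonal y *ᵥ (Aᴴ *ᵥ x) := by
    rw [← mulVec_mulVec, ← mulVec_mulVec, dotProduct_mulVec, star_mulVec,
      conjTranspose_conjTranspose]
  have summand (z w : 𝕜) : RCLike.re (star w * (z * w)) = RCLike.re z * ‖w‖ ^ 2 := by
    rw [mul_left_comm, RCLike.star_def, RCLike.conj_mul, ← RCLike.ofReal_pow, RCLike.re_mul_ofReal]
  rw [quadratic_form]
  simp only [dotProduct, mulVec_diagonal, Pi.star_apply, map_sum, summand]

theorem det_mul_diagonal_mul_conjTranspose_ne_zero_s3 [DecidableEq m] {A : Matrix m n 𝕜}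
    (hA : LinearIndependent 𝕜 A.row) {y : n → 𝕜} (hy : ∀ j, 0 < RCLike.re (y j)) :
    (A * diagonal y * Aᴴ).det ≠ 0 := by
  refine det_ne_zero_of_re_dotProduct_mulVec_pos fun x x_ne_zero ↦ ?_
  have image_ne_zero : Aᴴ *ᵥ x ≠ 0 := fun h ↦ x_ne_zero <| star_injective <|
    vecMul_injective_iff.2 hA <| by simpa [star_mulVec] using congrArg star h
  obtain ⟨j, hj⟩ := Function.ne_iff.1 image_ne_zero
  rw [re_dotProduct_mul_diagonal_mul_conjTranspose_mulVec]
  exact sum_pos' (fun j _ ↦ mul_nonneg (hy j).le (sq_nonneg _))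
    ⟨j, mem_univ j, mul_pos (hy j) (pow_pos (norm_pos_iff.2 hj) 2)⟩

theorem det_mul_diagonal_mul_conjTranspose_eq_sum_isColBasis {r : ℕ} {A : Matrix (Fin r) n 𝕜}
    {c : ℝ} (hA : ∀ g : Fin r ↪ n, (A.submatrix id g).det ≠ 0 → ‖(A.submatrix id g).det‖ = c)
    (y : n → 𝕜) :
    (A * diagonal y * Aᴴ).det =
      (c : 𝕜) ^ 2 * ∑ B : Finset n, if IsColBasis A B then ∏ b ∈ B, y b else 0 := by
  let e (B : {B : Finset n // #B = Fintype.card (Fin r)}) : Fin r ≃ B.1 :=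
    Fintype.equivOfCardEq (by simp [B.2])
  rw [det_mul_diagonal_mul_conjTranspose A y e, sum_isColBasis_eq_sum_card_eq, mul_sum]
  refine sum_congr rfl fun B _ ↦ ?_
  rw [isColBasis_iff_det_ne_zero (e B), RCLike.star_def, RCLike.mul_conj]
  split_ifs with det_ne_zero
  · have norm_det : ‖(A.submatrix id fun i ↦ (e B i : n)).det‖ = c :=
      hA ((e B).toEmbedding.trans (.subtype _)) det_ne_zero
    rw [norm_det]
  · simp [not_not.1 det_ne_zero]

end HalfPlane

theorem sixth_root_matroid_hpp_general {𝕜 : Type*} [RCLike 𝕜] {r : ℕ} {E : Type*} [Fintype E]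
    (A : Matrix (Fin r) E 𝕜) (hrank : A.rank = r) {c : ℝ}
    (hA : ∀ g : Fin r ↪ E, (A.submatrix id g).det ≠ 0 → ‖(A.submatrix id g).det‖ = c)
    (y : E → 𝕜) (hy : ∀ e, 0 < RCLike.re (y e)) :
    (∑ B : Finset E, if IsColBasis A B then ∏ e ∈ B, y e else 0) ≠ 0 := by
  have rows_independent : LinearIndependent 𝕜 A.row :=
    linearIndependent_row_of_rank_eq_card (by simpa using hrank)
  have det_ne_zero := det_mul_diagonal_mul_conjTranspose_ne_zero_s3 rows_independent hy
  rw [det_mul_diagonal_mul_conjTranspose_eq_sum_isColBasis hA] at det_ne_zero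
  exact right_ne_zero_of_mul det_ne_zero

/-- Every sixth-root of unity matroid has the half-plane property: if `A` is a complex
`r × E` matrix of full row rank `r` all of whose nonzero minors are sixth roots of unity,
then the basis-generating polynomial of the column matroid of `A` is nonvanishing whenever
every variable has strictly positive real part. -/
theorem sixth_root_matroid_hpp {r : ℕ} {E : Type*} [Fintype E]
    (A : Matrix (Fin r) E ℂ) (hrank : A.rank = r)
    (hsixth : ∀ (n : ℕ) (f : Fin n → Fin r) (g : Fin n → E),
      Function.Injective f → Function.Injective g →
      (A.submatrix f g).det ≠ 0 → (A.submatrix f g).det ^ 6 = 1)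
    (y : E → ℂ) (hy : ∀ e, 0 < (y e).re) :
    (∑ B : Finset E, if IsColBasis A B then ∏ e ∈ B, y e else 0) ≠ 0 :=
  sixth_root_matroid_hpp_general A hrank (fun g hg ↦ Complex.norm_eq_one_of_pow_eq_one
    (hsixth r id g Function.injective_id g.injective hg) (by norm_num)) y hy
end
end

section
/- Let P be a polynomial in the complex variables y = {y_e : e ∈ E}, let e ∈ E, and let n be the degree of P in the variable y_e. Write P = ∑_{j=0}^{n} P_j(y∖{y_e}) · y_e^j, and let Q := ∑_{j=0}^{n} P_j(y∖{y_e}) · y_e^{n−j} be the polynomial obtained by reversing the coefficients with respect to y_e (so that Q(y) = y_e^n · P evaluated with y_e replaced by 1/y_e, for y_e ≠ 0). If P has the half-plane property then Q has the half-plane property. -/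
open scoped BigOperators
open Classical

noncomputable section

/-- A multivariate complex polynomial has the half-plane property if it is nonvanishing
whenever every variable has strictly positive real part. -/
def HPPpoly {E : Type*} (P : MvPolynomial E ℂ) : Prop :=
  ∀ y : E → ℂ, (∀ e, 0 < (y e).re) → MvPolynomial.eval y P ≠ 0

theorem inv_re_pos_iff {z : ℂ} : 0 < z⁻¹.re ↔ 0 < z.re := by
  rcases eq_or_ne z 0 with rfl | hz
  · rw [inv_zero]
  · rw [Complex.inv_re, div_pos_iff_of_pos_right (Complex.normSq_pos.mpr hz)]

theorem update_inv_re_pos {E : Type*} [DecidableEq E] {y : E → ℂ} (hy : ∀ f, 0 < (y f).re)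
    (e : E) : ∀ f, 0 < (Function.update y e (y e)⁻¹ f).re :=
  (Function.forall_update_iff y fun _ z => 0 < z.re).mpr
    ⟨inv_re_pos_iff.mpr (hy e), fun f _ => hy f⟩

theorem reversal_half_plane_property_general {E : Type*} {P Q : MvPolynomial E ℂ} {e : E} {n : ℕ}
    (hQ : ∀ y : E → ℂ, y e ≠ 0 →
      MvPolynomial.eval y Q = y e ^ n * MvPolynomial.eval (Function.update y e (y e)⁻¹) P)
    (hP : HPPpoly P) : HPPpoly Q := by
  intro y hy
  have hye : y e ≠ 0 := Complex.ne_zero_of_re_pos (hy e)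
  rw [hQ y hye]
  exact mul_ne_zero (pow_ne_zero n hye) (hP _ (update_inv_re_pos hy e))

/-- Lemma 3.2: if `P` has the half-plane property, `n` is the degree of `P` in the
variable `y_e`, and `Q` is the reversal of `P` with respect to `y_e` (characterized by
`Q(y) = y_e^n · P(y with y_e ↦ 1/y_e)` for `y_e ≠ 0`), then `Q` has the half-plane
property. -/
theorem reversal_half_plane_property {E : Type*} [Fintype E]
    (P Q : MvPolynomial E ℂ) (e : E) (n : ℕ) (hn : P.degreeOf e = n)
    (hQ : ∀ y : E → ℂ, y e ≠ 0 →
      MvPolynomial.eval y Q =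
        (y e) ^ n * MvPolynomial.eval (Function.update y e (y e)⁻¹) P)
    (hP : HPPpoly P) : HPPpoly Q :=
  reversal_half_plane_property_general hQ hP
end
end

section
/- Let P be a polynomial in the complex variables y = {y_e : e ∈ E} and let e ∈ E. If P has the half-plane property, then the partial derivative ∂P/∂y_e is either identically zero or has the half-plane property. -/
open scoped BigOperators
open Classical

noncomputable section

/-!
Fix every variable but `y_e`: the half-plane property puts the roots of the resulting univariate
polynomial in the closed left half-plane, so its logarithmic derivative
`∂P/∂y_e / P = ∑ 1 / (y_e - root)` has nonnegative real part on the domain `Re y_i > 0`. If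
`∂P/∂y_e` vanishes at a point of this domain, the real part of this analytic quotient has a local
minimum there, and by the open mapping theorem the quotient vanishes near that point on every
complex line through it that stays locally in the domain. So the polynomial `∂P/∂y_e` vanishes on
each of these lines; they cover a polydisc, and `∂P/∂y_e = 0`.
-/

open Filter Topology

section LineRestriction

open Polynomial

variable {σ R : Type*} [CommSemiring R]

/-- The restriction of a multivariate polynomial to the line `t ↦ y + t • v`, as a polynomial in
the parameter `t`. Taking `v` to be a basis vector freezes all variables but one. -/
def lineRestriction (y v : σ → R) : MvPolynomial σ R →ₐ[R] R[X] :=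
  MvPolynomial.aeval fun i => C (y i) + C (v i) * X

theorem eval_lineRestriction (y v : σ → R) (P : MvPolynomial σ R) (t : R) :
    (lineRestriction y v P).eval t = MvPolynomial.eval (y + t • v) P := by
  have hline : (fun i => aeval t (C (y i) + C (v i) * X)) = y + t • v := by
    ext i
    simp [mul_comm t]
  rw [lineRestriction, ← coe_aeval_eq_eval, MvPolynomial.comp_aeval_apply, hline,
    MvPolynomial.aeval_eq_eval]

theorem eval_zero_lineRestriction (y v : σ → R) (P : MvPolynomial σ R) :
    (lineRestriction y v P).eval 0 = MvPolynomial.eval y P := by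
  rw [eval_lineRestriction, zero_smul, add_zero]

theorem derivative_lineRestriction_single [DecidableEq σ] (y : σ → R) (e : σ)
    (P : MvPolynomial σ R) :
    derivative (lineRestriction y (Pi.single e 1) P) =
      lineRestriction y (Pi.single e 1) (MvPolynomial.pderiv e P) := by
  induction P using MvPolynomial.induction_on with
  | C a => simp [lineRestriction]
  | add p q hp hq => simp only [map_add, hp, hq]
  | mul_X p i hp =>
    have hX : derivative (lineRestriction y (Pi.single e 1) (MvPolynomial.X i)) =
        lineRestriction y (Pi.single e 1) (MvPolynomial.pderiv e (MvPolynomial.X i)) := by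
      obtain rfl | hi := eq_or_ne i e <;> simp [lineRestriction, MvPolynomial.pderiv_X, *]
    simp only [map_mul, derivative_mul, Derivation.leibniz, smul_eq_mul, map_add, hp, hX]
    ring

end LineRestriction

theorem re_eval_derivative_div_eval_nonneg {p : Polynomial ℂ} {z : ℂ} (hz : p.eval z ≠ 0)
    (hroots : ∀ r ∈ p.roots, r.re ≤ z.re) : 0 ≤ (p.derivative.eval z / p.eval z).re := by
  rw [(IsAlgClosed.splits p).eval_derivative_div_eval_of_ne_zero hz,
    ← Complex.coe_reAddGroupHom, map_multiset_sum, Multiset.map_map]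
  refine Multiset.sum_nonneg (Multiset.forall_mem_map_iff.2 fun r hr => ?_)
  have : 0 ≤ (z - r).re := sub_nonneg.2 (hroots r hr)
  simpa [Complex.inv_re] using div_nonneg this (Complex.normSq_nonneg (z - r))

theorem re_add_mul_pos {a b t : ℂ} (ha : 0 < a.re) (hb : ‖b‖ ≤ a.re) (ht : ‖t‖ < 1) :
    0 < (a + t * b).re := by
  have htb : ‖t * b‖ < a.re := calc
    ‖t * b‖ = ‖t‖ * ‖b‖ := norm_mul t b
    _ ≤ ‖t‖ * a.re := by gcongr
    _ < a.re := mul_lt_of_lt_one_left ha ht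
  have hre : -‖t * b‖ ≤ (t * b).re := (abs_le.1 (Complex.abs_re_le_norm _)).1
  rw [Complex.add_re]
  linarith

theorem eventually_eq_of_isLocalMin_re {F : Type*} [NormedAddCommGroup F] [NormedSpace ℂ F]
    {g : F → ℂ} {z : F} (hg : AnalyticAt ℂ g z) (hmin : IsLocalMin (fun x => (g x).re) z) :
    ∀ᶠ x in 𝓝 z, g x = g z := by
  refine hg.eventually_constant_or_nhds_le_map_nhds.resolve_right fun hopen => ?_
  have hge : ∀ᶠ x in 𝓝 (g z).re, (g z).re ≤ x :=
    (Complex.isOpenMap_re.nhds_le (g z)).trans (map_mono hopen) hmin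
  obtain ⟨x, hx, hlt⟩ := ((hge.filter_mono nhdsWithin_le_nhds).and
    (self_mem_nhdsWithin : Set.Iio (g z).re ∈ 𝓝[<] (g z).re)).exists
  exact hx.not_gt hlt

namespace HPPpoly

variable {E : Type*} {P : MvPolynomial E ℂ} {y : E → ℂ}

theorem re_eval_pderiv_div_eval_nonneg (hP : HPPpoly P) (hy : ∀ i, 0 < (y i).re) (e : E) :
    0 ≤ (MvPolynomial.eval y (MvPolynomial.pderiv e P) / MvPolynomial.eval y P).re := by
  set v : E → ℂ := Pi.single e 1
  rw [← eval_zero_lineRestriction y v, ← eval_zero_lineRestriction y v,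
    ← derivative_lineRestriction_single]
  refine re_eval_derivative_div_eval_nonneg ?_ fun r hr => ?_
  · rw [eval_zero_lineRestriction]
    exact hP y hy
  · by_contra! hr_pos
    refine hP (y + r • v) (fun i => ?_) ?_
    · obtain rfl | hi := eq_or_ne i e
      · simpa [v] using add_pos (hy i) hr_pos
      · simpa [v, hi] using hy i
    · rw [← eval_lineRestriction]
      exact Polynomial.isRoot_of_mem_roots hr

-- Bounding `v i` by `(y i).re` keeps `y + t • v` in the domain for all `‖t‖ < 1`, uniformly in the
-- possibly infinitely many coordinates `i`.
theorem eval_add_pderiv_eq_zero (hP : HPPpoly P) (hy : ∀ i, 0 < (y i).re) {e : E}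
    (he : MvPolynomial.eval y (MvPolynomial.pderiv e P) = 0) {v : E → ℂ}
    (hv : ∀ i, ‖v i‖ ≤ (y i).re) :
    MvPolynomial.eval (y + v) (MvPolynomial.pderiv e P) = 0 := by
  set p := lineRestriction y v P
  set d := lineRestriction y v (MvPolynomial.pderiv e P)
  have hre_pos : ∀ᶠ t in 𝓝 (0 : ℂ), ∀ i, 0 < ((y + t • v) i).re := by
    filter_upwards [Metric.ball_mem_nhds (0 : ℂ) one_pos] with t ht i
    exact re_add_mul_pos (hy i) (hv i) (mem_ball_zero_iff.1 ht)
  have hp_ne : ∀ᶠ t in 𝓝 (0 : ℂ), p.eval t ≠ 0 := by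
    filter_upwards [hre_pos] with t ht
    rw [eval_lineRestriction]
    exact hP _ ht
  have hd_zero : d.eval 0 = 0 := by rwa [eval_zero_lineRestriction]
  have hmin : IsLocalMin (fun t => (d.eval t / p.eval t).re) 0 := by
    filter_upwards [hre_pos] with t ht
    rw [hd_zero, zero_div, Complex.zero_re, eval_lineRestriction, eval_lineRestriction]
    exact hP.re_eval_pderiv_div_eval_nonneg ht e
  have hanalytic : AnalyticAt ℂ (fun t => d.eval t / p.eval t) 0 :=
    (AnalyticOnNhd.eval_polynomial d 0 (Set.mem_univ _)).div
      (AnalyticOnNhd.eval_polynomial p 0 (Set.mem_univ _)) hp_ne.self_of_nhds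
  have hd_eventually : ∀ᶠ t in 𝓝 (0 : ℂ), d.eval t = 0 := by
    filter_upwards [eventually_eq_of_isLocalMin_re hanalytic hmin, hp_ne] with t ht hpt
    simpa [hd_zero, hpt] using ht
  have hd : d = 0 := d.eq_zero_of_infinite_isRoot (infinite_of_mem_nhds 0 hd_eventually)
  rw [← one_smul ℂ v, ← eval_lineRestriction]
  simp [d, hd]

end HPPpoly

theorem pderiv_half_plane_property_general {E : Type*} (P : MvPolynomial E ℂ) (e : E)
    (hP : HPPpoly P) :
    MvPolynomial.pderiv e P = 0 ∨ HPPpoly (MvPolynomial.pderiv e P) := by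
  by_contra! h
  obtain ⟨hne, hD⟩ := h
  simp only [HPPpoly, not_forall, not_not] at hD
  obtain ⟨y, hy, he⟩ := hD
  refine hne (MvPolynomial.funext_set (fun i => Metric.closedBall (y i) (y i).re)
    (fun i => infinite_of_mem_nhds (y i) (Metric.closedBall_mem_nhds _ (hy i))) fun w hw => ?_)
  have hwy : ∀ i, ‖(w - y) i‖ ≤ (y i).re := fun i => by
    simpa [dist_eq_norm] using hw i (Set.mem_univ i)
  simpa using hP.eval_add_pderiv_eq_zero hy he hwy

/-- Lemma 3.3 ([COSW], Proposition 2.8): if `P` has the half-plane property, then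
`∂P/∂y_e` is identically zero or has the half-plane property. -/
theorem pderiv_half_plane_property {E : Type*} [Fintype E]
    (P : MvPolynomial E ℂ) (e : E) (hP : HPPpoly P) :
    MvPolynomial.pderiv e P = 0 ∨ HPPpoly (MvPolynomial.pderiv e P) :=
  pderiv_half_plane_property_general P e hP
end
end

section
/- Let P be a nonzero homogeneous polynomial in the complex variables y = {y_e : e ∈ E}. For families of nonnegative real numbers a = {a_e : e ∈ E} and b = {b_e : e ∈ E}, let P(ax + b) denote the univariate polynomial in x obtained by substituting y_e = a_e·x + b_e for each e ∈ E. Then the following are equivalent: (a) P has the half-plane property; (b) for all families of nonnegative real numbers a and b, the polynomial P(ax + b) is either identically zero or has only real nonpositive zeros (every complex root is a nonpositive real number). -/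
/-!
The slit plane `ℂ ∖ (-∞, 0]` consists of the quotients `v / u` of points of the open right
half-plane, and homogeneity gives `P(av + bu) = u ^ r * P(a(v / u) + b)`.

If `P` has the half-plane property and `a, b > 0`, then `av + bu` has positive real parts, so
`P(ax + b)` has no zero in the slit plane; the case `a, b ≥ 0` follows by a Hurwitz-type limit.

Conversely, finitely many points of the half-plane lie in the open cone spanned by two of its
points `u, v`, so a zero of `P` there is `av + bu` with `a, b > 0`, and `P(ax + b)` vanishes at
`v / u`, hence identically. In particular `P(b) = 0`. For `0 ≤ t ≤ b` the polynomial
`P((b - t)x + t)` then vanishes at `1`, hence identically, so `P(t) = 0` on a whole box and `P = 0`.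
-/

open scoped BigOperators
open Classical

noncomputable section

section ZeroFreeLimits

open Filter Polynomial
open scoped Topology

theorem norm_eval_le_two_pow_mul_norm_eval {𝕜 : Type*} [NormedField 𝕜] {p : 𝕜[X]}
    (hp : p.Splits) {z z₀ : 𝕜} (h : ∀ w ∈ p.roots, ‖z - z₀‖ ≤ ‖z₀ - w‖) :
    ‖p.eval z‖ ≤ 2 ^ p.natDegree * ‖p.eval z₀‖ := by
  have norm_eval (x : 𝕜) :
      ‖p.eval x‖ = ‖p.leadingCoeff‖ * (p.roots.map fun w => ‖x - w‖).prod := by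
    have norm_prod := map_multiset_prod (normHom : 𝕜 →*₀ ℝ) (p.roots.map (x - ·))
    rw [Multiset.map_map] at norm_prod
    rw [hp.eval_eq_prod_roots, norm_mul]
    exact congrArg _ norm_prod
  have factor_le : ∀ w ∈ p.roots, ‖z - w‖ ≤ 2 * ‖z₀ - w‖ := fun w hw => by
    linarith [norm_sub_le_norm_sub_add_norm_sub z z₀ w, h w hw]
  calc ‖p.eval z‖ = ‖p.leadingCoeff‖ * (p.roots.map fun w => ‖z - w‖).prod := norm_eval z
    _ ≤ ‖p.leadingCoeff‖ * (p.roots.map fun w => 2 * ‖z₀ - w‖).prod := by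
      gcongr
      exact Multiset.prod_map_le_prod_map₀ _ _ (fun _ _ => norm_nonneg _) factor_le
    _ = 2 ^ p.natDegree * ‖p.eval z₀‖ := by
      rw [Multiset.prod_map_mul, Multiset.map_const', Multiset.prod_replicate,
        ← hp.natDegree_eq_card_roots, norm_eval z₀, mul_left_comm]

/- Hurwitz's theorem for polynomials of bounded degree: by `norm_eval_le_two_pow_mul_norm_eval`, a
zero of the limit spreads to a disc around it. -/
theorem eq_zero_or_forall_eval_ne_zero_of_tendsto {𝕜 ι : Type*} [NontriviallyNormedField 𝕜]
    {l : Filter ι} [l.NeBot] {p : ι → 𝕜[X]} {q : 𝕜[X]} {U : Set 𝕜} {n : ℕ} (hU : IsOpen U)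
    (hsplits : ∀ᶠ i in l, (p i).Splits) (hdeg : ∀ᶠ i in l, (p i).natDegree ≤ n)
    (hne : ∀ᶠ i in l, ∀ z ∈ U, (p i).eval z ≠ 0)
    (hlim : ∀ z ∈ U, Tendsto (fun i => (p i).eval z) l (𝓝 (q.eval z))) :
    q = 0 ∨ ∀ z ∈ U, q.eval z ≠ 0 := by
  refine or_iff_not_imp_right.mpr fun hzero => ?_
  push Not at hzero
  obtain ⟨z₀, hz₀, hqz₀⟩ := hzero
  obtain ⟨ρ, hρ, hball⟩ := Metric.isOpen_iff.mp hU z₀ hz₀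
  have eval_eq_zero : ∀ z ∈ Metric.ball z₀ ρ, q.eval z = 0 := fun z hz => by
    have hbound : ∀ᶠ i in l, ‖(p i).eval z‖ ≤ 2 ^ n * ‖(p i).eval z₀‖ := by
      filter_upwards [hsplits, hdeg, hne] with i hs hd hi
      have roots_far : ∀ w ∈ (p i).roots, ‖z - z₀‖ ≤ ‖z₀ - w‖ := fun w hw => by
        by_contra! hlt
        refine hi w (hball ?_) (isRoot_of_mem_roots hw)
        rw [mem_ball_iff_norm'] at *
        exact hlt.trans (by rwa [norm_sub_rev])
      refine (norm_eval_le_two_pow_mul_norm_eval hs roots_far).trans ?_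
      gcongr
      exact one_le_two
    have hlimit := le_of_tendsto_of_tendsto (hlim z (hball hz)).norm
      ((hlim z₀ hz₀).norm.const_mul (2 ^ n)) hbound
    simpa [hqz₀] using hlimit
  exact eq_zero_of_infinite_isRoot q
    ((infinite_of_mem_nhds z₀ (Metric.ball_mem_nhds z₀ hρ)).mono eval_eq_zero)

end ZeroFreeLimits

section RightHalfPlane

open Complex Filter

-- The witness `c = ‖z‖ + conj z` has argument `-arg z / 2`, so `c` and `c * z` are equally inclined.
theorem mem_slitPlane_iff_exists_re_pos {z : ℂ} :
    z ∈ slitPlane ↔ ∃ c : ℂ, 0 < c.re ∧ 0 < (c * z).re := by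
  refine ⟨fun hz => ?_, fun ⟨c, hc, hcz⟩ => ?_⟩
  · have hnorm : 0 < ‖z‖ := norm_pos_iff.mpr (slitPlane_ne_zero hz)
    have hpos : 0 < ‖z‖ + z.re := by
      rcases mem_slitPlane_iff.mp hz with hre | him
      · positivity
      · linarith [neg_abs_le z.re, abs_re_lt_norm.mpr him]
    have hre : ((‖z‖ + starRingEnd ℂ z) * z).re = ‖z‖ * (‖z‖ + z.re) := by
      rw [add_mul, conj_mul', ← ofReal_pow, add_re, re_ofReal_mul, ofReal_re]
      ring
    exact ⟨‖z‖ + starRingEnd ℂ z, by simpa using hpos, hre ▸ mul_pos hnorm hpos⟩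
  · by_contra hz
    rw [mem_slitPlane_iff, not_or, not_lt, not_not] at hz
    rw [mul_re, hz.2, mul_zero, sub_zero] at hcz
    exact hcz.not_ge (mul_nonpos_of_nonneg_of_nonpos hc.le hz.1)

theorem exists_re_pos_and_pos_combination_of_finite {s : Set ℂ} (hs : s.Finite)
    (hpos : ∀ y ∈ s, 0 < y.re) :
    ∃ u v : ℂ, 0 < u.re ∧ 0 < v.re ∧
      ∀ y ∈ s, ∃ a b : ℝ, 0 < a ∧ 0 < b ∧ y = a * v + b * u := by
  obtain ⟨M, hM, hslope⟩ : ∃ M : ℝ, 0 < M ∧ ∀ y ∈ s, |y.im| / y.re < M :=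
    ((eventually_gt_atTop 0).and
      ((eventually_all_finite hs).mpr fun _ _ => eventually_gt_atTop _)).exists
  refine ⟨1 - M * I, 1 + M * I, by simp, by simp, fun y hy => ?_⟩
  have him : |y.im / M| < y.re := by
    rw [abs_div, abs_of_pos hM]
    exact (div_lt_comm₀ (hpos y hy) hM).mp (hslope y hy)
  obtain ⟨hlower, hupper⟩ := abs_lt.mp him
  refine ⟨(y.re + y.im / M) / 2, (y.re - y.im / M) / 2, by linarith, by linarith, ?_⟩
  have hM' : (M : ℂ) ≠ 0 := mod_cast hM.ne'
  nth_rewrite 1 [← re_add_im y]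
  push_cast
  field_simp
  ring

end RightHalfPlane

section LineSubst

variable {E R : Type*} [CommSemiring R]

/-- The univariate polynomial `P(ax + b)`, obtained by substituting `y_e = a_e x + b_e` in `P`. -/
def lineSubst (P : MvPolynomial E R) (a b : E → R) : Polynomial R :=
  MvPolynomial.aeval
    (fun e => Polynomial.C (a e) * Polynomial.X + Polynomial.C (b e)) P

theorem eval_lineSubst (P : MvPolynomial E R) (a b : E → R) (z : R) :
    (lineSubst P a b).eval z = MvPolynomial.eval (fun e => a e * z + b e) P := by
  rw [lineSubst, ← Polynomial.coe_evalRingHom, MvPolynomial.map_aeval]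
  exact MvPolynomial.eval₂Hom_congr (by ext; simp) (by simp) rfl

theorem natDegree_lineSubst_le (P : MvPolynomial E R) (a b : E → R) :
    (lineSubst P a b).natDegree ≤ P.totalDegree := by
  simpa only [mul_one, lineSubst] using MvPolynomial.aeval_natDegree_le P le_rfl _
    fun _ => Polynomial.natDegree_linear_le

theorem eval_mul_left_of_isHomogeneous {P : MvPolynomial E R} {r : ℕ} (hP : P.IsHomogeneous r)
    (c : R) (y : E → R) :
    MvPolynomial.eval (fun e => c * y e) P = c ^ r * MvPolynomial.eval y P := by
  rw [MvPolynomial.eval_eq, MvPolynomial.eval_eq, Finset.mul_sum]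
  refine Finset.sum_congr rfl fun d hd => ?_
  have hdeg : ∑ e ∈ d.support, d e = r := by
    rw [← hP (MvPolynomial.mem_support_iff.mp hd), Finsupp.weight_apply, Finsupp.sum]
    simp
  simp only [mul_pow, Finset.prod_mul_distrib, Finset.prod_pow_eq_pow_sum, hdeg]
  ring

end LineSubst

section HalfPlaneProperty

open Complex

variable {E : Type*} {P : MvPolynomial E ℂ} {r : ℕ}

theorem HPPpoly.eval_lineSubst_ne_zero (h : HPPpoly P) (hP : P.IsHomogeneous r) {a b : E → ℝ}
    (ha : ∀ e, 0 < a e) (hb : ∀ e, 0 < b e) {z : ℂ} (hz : z ∈ slitPlane) :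
    (lineSubst P (fun e => a e) (fun e => b e)).eval z ≠ 0 := by
  obtain ⟨c, hc, hcz⟩ := mem_slitPlane_iff_exists_re_pos.mp hz
  have hre (e : E) : 0 < (c * (a e * z + b e)).re := by
    have heq : c * (a e * z + b e) = a e * (c * z) + b e * c := by ring
    rw [heq, add_re, re_ofReal_mul, re_ofReal_mul]
    exact add_pos (mul_pos (ha e) hcz) (mul_pos (hb e) hc)
  have hne := h _ hre
  rw [eval_mul_left_of_isHomogeneous hP] at hne
  rw [eval_lineSubst]
  exact right_ne_zero_of_mul hne

/-- Condition (b) of the theorem: each `P(ax + b)` with `a, b ≥ 0` vanishes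
identically or has only real nonpositive zeros, which is encoded as having no zero in the slit
plane `ℂ ∖ (-∞, 0]`. -/
def HasRealRootedSubstitutions (P : MvPolynomial E ℂ) : Prop :=
  ∀ a b : E → ℝ, (∀ e, 0 ≤ a e) → (∀ e, 0 ≤ b e) →
    lineSubst P (fun e => (a e : ℂ)) (fun e => (b e : ℂ)) = 0 ∨
      ∀ z ∈ slitPlane, (lineSubst P (fun e => (a e : ℂ)) (fun e => (b e : ℂ))).eval z ≠ 0

theorem HPPpoly.hasRealRootedSubstitutions (h : HPPpoly P) (hP : P.IsHomogeneous r) :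
    HasRealRootedSubstitutions P := by
  intro a b ha hb
  let p (ε : ℝ) := lineSubst P (fun e => ((a e + ε : ℝ) : ℂ)) (fun e => ((b e + ε : ℝ) : ℂ))
  refine eq_zero_or_forall_eval_ne_zero_of_tendsto (p := p) (l := nhdsWithin 0 (Set.Ioi 0))
    isOpen_slitPlane (.of_forall fun ε => IsAlgClosed.splits (p ε))
    (.of_forall fun ε => natDegree_lineSubst_le P _ _) ?_ fun z _ => ?_
  · filter_upwards [self_mem_nhdsWithin] with ε hε z hz
    exact h.eval_lineSubst_ne_zero hP (fun e => add_pos_of_nonneg_of_pos (ha e) hε)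
      (fun e => add_pos_of_nonneg_of_pos (hb e) hε) hz
  · have hcont : Continuous fun ε => (p ε).eval z := by
      simp only [p, eval_lineSubst]
      exact P.continuous_eval.comp (by fun_prop)
    simpa [p] using (hcont.tendsto 0).mono_left nhdsWithin_le_nhds

theorem hppPoly_of_finite_range
    (h : ∀ y : E → ℂ, (Set.range y).Finite → (∀ e, 0 < (y e).re) → MvPolynomial.eval y P ≠ 0) :
    HPPpoly P := by
  intro y hy
  let y' : E → ℂ := fun e => if e ∈ P.vars then y e else 1
  have heval : MvPolynomial.eval y P = MvPolynomial.eval y' P :=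
    MvPolynomial.eval₂Hom_congr' rfl (fun e he _ => (if_pos he).symm) rfl
  have hfinite : (Set.range y').Finite := by
    refine ((P.vars.finite_toSet.image y).insert 1).subset ?_
    rintro _ ⟨e, rfl⟩
    by_cases he : e ∈ P.vars
    · exact .inr ⟨e, he, (if_pos he).symm⟩
    · exact .inl (if_neg he)
  rw [heval]
  refine h y' hfinite fun e => ?_
  by_cases he : e ∈ P.vars <;> simp [y', he, hy e]

theorem HasRealRootedSubstitutions.eval_ofReal_ne_zero (h : HasRealRootedSubstitutions P)
    (hP0 : P ≠ 0) {β : E → ℝ} (hβ : ∀ e, 0 < β e) :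
    MvPolynomial.eval (fun e => (β e : ℂ)) P ≠ 0 := by
  refine fun hzero => hP0 (MvPolynomial.funext_set (fun e => ofReal '' Set.Icc 0 (β e))
    (fun e => (Set.Icc_infinite (hβ e)).image ofReal_injective.injOn) fun x hx => ?_)
  choose t ht htx using fun e => hx e (Set.mem_univ e)
  obtain rfl : (fun e => (t e : ℂ)) = x := funext htx
  have hline : lineSubst P (fun e => ((β e - t e : ℝ) : ℂ)) (fun e => (t e : ℂ)) = 0 :=
    (h _ t (fun e => sub_nonneg.mpr (ht e).2) (fun e => (ht e).1)).resolve_right fun hne =>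
      hne 1 one_mem_slitPlane (by simpa [eval_lineSubst] using hzero)
  simpa [eval_lineSubst] using congrArg (Polynomial.eval 0) hline

theorem HasRealRootedSubstitutions.hppPoly (h : HasRealRootedSubstitutions P)
    (hP0 : P ≠ 0) (hP : P.IsHomogeneous r) : HPPpoly P := by
  refine hppPoly_of_finite_range fun y hfinite hy hzero => ?_
  obtain ⟨u, v, hu, hv, hcomb⟩ :=
    exists_re_pos_and_pos_combination_of_finite hfinite (Set.forall_mem_range.mpr hy)
  choose a b ha hb hyab using fun e => hcomb (y e) (Set.mem_range_self e)
  have hu0 : u ≠ 0 := fun hu0 => by simp [hu0] at hu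
  have hquot : v / u ∈ slitPlane :=
    mem_slitPlane_iff_exists_re_pos.mpr ⟨u, hu, by rwa [mul_div_cancel₀ v hu0]⟩
  have hy_eq : y = fun e => u * (a e * (v / u) + b e) := funext fun e => by
    rw [hyab e]
    field_simp
  rw [hy_eq, eval_mul_left_of_isHomogeneous hP, ← eval_lineSubst] at hzero
  have hroot := (mul_eq_zero.mp hzero).resolve_left (pow_ne_zero r hu0)
  have hline : lineSubst P (fun e => (a e : ℂ)) (fun e => (b e : ℂ)) = 0 :=
    (h a b (fun e => (ha e).le) fun e => (hb e).le).resolve_right fun hne => hne _ hquot hroot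
  exact h.eval_ofReal_ne_zero hP0 hb
    (by simpa [eval_lineSubst] using congrArg (Polynomial.eval 0) hline)

theorem hasRealRootedSubstitutions_iff :
    HasRealRootedSubstitutions P ↔
      ∀ a b : E → ℝ, (∀ e, 0 ≤ a e) → (∀ e, 0 ≤ b e) →
        lineSubst P (fun e => (a e : ℂ)) (fun e => (b e : ℂ)) = 0 ∨
          ∀ z : ℂ, (lineSubst P (fun e => (a e : ℂ)) (fun e => (b e : ℂ))).eval z = 0 →
            z.im = 0 ∧ z.re ≤ 0 := by
  have hslit (z : ℂ) : z.im = 0 ∧ z.re ≤ 0 ↔ z ∉ slitPlane := by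
    rw [mem_slitPlane_iff, not_or, not_lt, not_not, and_comm]
  simp only [hslit, HasRealRootedSubstitutions, ne_eq, imp_not_comm]

end HalfPlaneProperty

theorem homogeneous_hpp_iff_real_rooted_substitutions_general {E : Type*}
    (P : MvPolynomial E ℂ) (r : ℕ) (hP0 : P ≠ 0) (hhom : P.IsHomogeneous r) :
    HPPpoly P ↔
      ∀ a b : E → ℝ, (∀ e, 0 ≤ a e) → (∀ e, 0 ≤ b e) →
        ∀ f : Polynomial ℂ,
          f = MvPolynomial.aeval
            (fun e => Polynomial.C ((a e : ℝ) : ℂ) * Polynomial.X +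
              Polynomial.C ((b e : ℝ) : ℂ)) P →
          (f = 0 ∨ ∀ z : ℂ, f.eval z = 0 → z.im = 0 ∧ z.re ≤ 0) := by
  have hpp_iff : HPPpoly P ↔ HasRealRootedSubstitutions P :=
    ⟨fun h => h.hasRealRootedSubstitutions hhom, fun h => h.hppPoly hP0 hhom⟩
  simp only [forall_eq]
  exact hpp_iff.trans hasRealRootedSubstitutions_iff

/-- Lemma 3.5 ([COSW], Proposition 5.2): a nonzero homogeneous polynomial `P` has the
half-plane property iff for all families of nonnegative reals `a, b`, the univariate
polynomial `P(a·x + b)` is identically zero or has only real nonpositive zeros. -/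
theorem homogeneous_hpp_iff_real_rooted_substitutions {E : Type*} [Fintype E]
    (P : MvPolynomial E ℂ) (r : ℕ) (hP0 : P ≠ 0) (hhom : P.IsHomogeneous r) :
    HPPpoly P ↔
      ∀ a b : E → ℝ, (∀ e, 0 ≤ a e) → (∀ e, 0 ≤ b e) →
        ∀ f : Polynomial ℂ,
          f = MvPolynomial.aeval
            (fun e => Polynomial.C ((a e : ℝ) : ℂ) * Polynomial.X +
              Polynomial.C ((b e : ℝ) : ℂ)) P →
          (f = 0 ∨ ∀ z : ℂ, f.eval z = 0 → z.im = 0 ∧ z.re ≤ 0) :=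
  homogeneous_hpp_iff_real_rooted_substitutions_general P r hP0 hhom
end
end
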